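/- arXiv:1309.0595 — 5 statements merged into one kernel-verified Lean document; each statement's English description precedes it below -/
import Mathlib

section
/- For every real number z with 0 ≤ z < 4/27, the series ∑_{n≥0} C(3n+1, n) z^n/(3n+1) converges and equals 3/(3 cos²α − sin²α), where α = (1/3)·arcsin(√(27z/4)). -/
open Real

/-- Generalized binomial coefficient `C(a,n) = a(a-1)⋯(a-n+1)/n!`. -/
noncomputable def gbinom (a : ℝ) (n : ℕ) : ℝ :=
  (∏ i ∈ Finset.range n, (a - i)) / (n.factorial : ℝ)

/-!
The Fuss coefficients for `p = 3` are, up to the factor `(27/4)^n`, the coefficients of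
`₂F₁(2/3, 1/3; 3/2; ·)`, by the multiplication formula for the Pochhammer symbol. Two first-order
contiguous relations of Gauss say that `a sin x · ₂F₁((1+a)/2, (1-a)/2; 3/2; sin² x)` and
`cos x · ₂F₁((1+a)/2, (1-a)/2; 1/2; sin² x)` satisfy the differential system that characterizes
`sin (a x)` and `cos (a x)`. At `a = 1/3` and `x = 3α` this gives
`₂F₁(2/3, 1/3; 3/2; sin² 3α) = 3 sin α / sin 3α`, and `sin 3α = sin α (3 cos² α - sin² α)`.
-/

open scoped Nat

section Pochhammer

section CommSemiring

variable {R : Type*} [CommSemiring R]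

theorem ascPochhammer_eval_eq_prod_range (n : ℕ) (x : R) :
    (ascPochhammer R n).eval x = ∏ j ∈ Finset.range n, (x + j) := by
  induction n with
  | zero => simp
  | succ n ih => rw [ascPochhammer_succ_eval, ih, Finset.prod_range_succ]

theorem ascPochhammer_eval_add (m n : ℕ) (x : R) :
    (ascPochhammer R (m + n)).eval x =
      (ascPochhammer R m).eval x * (ascPochhammer R n).eval (x + m) := by
  simp [← ascPochhammer_mul]

theorem ascPochhammer_succ_eval_left (n : ℕ) (x : R) :
    (ascPochhammer R (n + 1)).eval x = x * (ascPochhammer R n).eval (x + 1) := by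
  simp [ascPochhammer_succ_left]

end CommSemiring

variable {K : Type*} [Field K]

theorem ascPochhammer_eval_natCast_mul {k : ℕ} (hk : (k : K) ≠ 0) (n : ℕ) (x : K) :
    (ascPochhammer K (k * n)).eval (k * x) =
      k ^ (k * n) * ∏ j ∈ Finset.range k, (ascPochhammer K n).eval (x + j / k) := by
  have factor (n j : ℕ) : (k * x + (k * n : ℕ) + j : K) = k * (x + j / k + n) := by
    push_cast
    field
  induction n with
  | zero => simp
  | succ n ih =>
    rw [Nat.mul_succ, ascPochhammer_eval_add, ih, ascPochhammer_eval_eq_prod_range k]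
    simp only [factor, ascPochhammer_succ_eval, Finset.prod_mul_distrib, Finset.prod_const,
      Finset.card_range]
    ring

variable [CharZero K]

theorem factorial_three_mul_eq_ascPochhammer (n : ℕ) :
    ((3 * n)! : K) =
      27 ^ n * n ! * (ascPochhammer K n).eval (2 / 3) * (ascPochhammer K n).eval (1 / 3) := by
  have hthree : ((3 : ℕ) : K) = 3 := Nat.cast_ofNat
  calc ((3 * n)! : K) = (ascPochhammer K (3 * n)).eval ((3 : ℕ) * (1 / 3 : K)) := by
        rw [hthree, mul_one_div_cancel three_ne_zero, ascPochhammer_eval_one]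
    _ = 3 ^ (3 * n) * ∏ j ∈ Finset.range 3, (ascPochhammer K n).eval (1 / 3 + j / 3 : K) := by
        rw [ascPochhammer_eval_natCast_mul (by norm_num), hthree]
    _ = 3 ^ (3 * n) *
          ((ascPochhammer K n).eval (1 / 3 : K) * (ascPochhammer K n).eval (2 / 3 : K) * n !) := by
        norm_num [Finset.prod_range_succ, ascPochhammer_eval_one]
    _ = _ := by rw [pow_mul]; ring

theorem factorial_two_mul_add_one_eq_ascPochhammer (n : ℕ) :
    ((2 * n + 1)! : K) = 4 ^ n * n ! * (ascPochhammer K n).eval (3 / 2) := by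
  have htwo : ((2 : ℕ) : K) = 2 := Nat.cast_ofNat
  calc ((2 * n + 1)! : K) = (ascPochhammer K (2 * n)).eval ((2 : ℕ) * (1 : K)) := by
        rw [← ascPochhammer_eval_one, ascPochhammer_succ_eval_left, one_mul, one_add_one_eq_two,
          htwo, mul_one]
    _ = 2 ^ (2 * n) * ∏ j ∈ Finset.range 2, (ascPochhammer K n).eval (1 + j / 2 : K) := by
        rw [ascPochhammer_eval_natCast_mul (by norm_num), htwo]
    _ = 2 ^ (2 * n) * (n ! * (ascPochhammer K n).eval (3 / 2 : K)) := by
        norm_num [Finset.prod_range_succ, ascPochhammer_eval_one]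
    _ = _ := by rw [pow_mul]; ring

end Pochhammer

section FussCoefficient

theorem gbinom_natCast (m n : ℕ) : gbinom m n = m.choose n := by
  rw [gbinom, Nat.cast_choose_eq_descPochhammer_div, descPochhammer_eval_eq_prod_range]

theorem gbinom_add_add_one_div (l n : ℕ) :
    gbinom (l + n + 1) n / (l + n + 1) = (l + n)! / (n ! * (l + 1)!) := by
  have h : ((l + n + 1).choose n : ℝ) = (l + n + 1)! / ((l + 1)! * n !) := by
    rw [add_right_comm, ← Nat.choose_symm_add, Nat.cast_add_choose]
  have h' : gbinom (l + n + 1) n = (l + n + 1).choose n := mod_cast gbinom_natCast (l + n + 1) n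
  rw [h', h, Nat.factorial_succ (l + n)]
  push_cast
  field

theorem gbinom_three_mul_add_one_div (n : ℕ) :
    gbinom (3 * n + 1) n / (3 * n + 1) =
      (27 / 4) ^ n * ordinaryHypergeometricCoefficient (2 / 3 : ℝ) (1 / 3) (3 / 2) n := by
  have h := gbinom_add_add_one_div (2 * n) n
  have h₃ : 2 * n + n = 3 * n := by ring
  have h₃' : ((2 * n : ℕ) + n : ℝ) = 3 * n := mod_cast h₃
  rw [h₃, h₃', factorial_three_mul_eq_ascPochhammer,
    factorial_two_mul_add_one_eq_ascPochhammer] at h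
  have h₀ : (ascPochhammer ℝ n).eval (3 / 2) ≠ 0 := (ascPochhammer_pos n _ (by norm_num)).ne'
  rw [h, ordinaryHypergeometricCoefficient, div_pow]
  field

end FussCoefficient

section PowerSeries

variable {𝕜 : Type*} [NontriviallyNormedField 𝕜] [CompleteSpace 𝕜]
  {p : FormalMultilinearSeries 𝕜 𝕜 𝕜} {x : 𝕜}

theorem hasSum_coeff_mul_pow (hx : ‖x‖ₑ < p.radius) :
    HasSum (fun n => p.coeff n * x ^ n) (p.sum x) := by
  simpa [mul_comm] using p.hasSum (x := x) (by simpa using hx)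

theorem hasSum_coeff_succ_mul_pow_deriv (hx : ‖x‖ₑ < p.radius) :
    HasSum (fun n : ℕ => (n + 1) * p.coeff (n + 1) * x ^ n) (deriv p.sum x) := by
  have h := (p.derivSeries.hasSum (x := x)
    (by simpa using hx.trans_le p.radius_le_radius_derivSeries)).mapL
      (ContinuousLinearMap.apply 𝕜 𝕜 (1 : 𝕜))
  simpa [← fderiv_apply_one_eq_deriv, FormalMultilinearSeries.fderiv_sum hx, mul_comm] using h

theorem hasSum_natCast_mul_coeff_mul_pow (hx : ‖x‖ₑ < p.radius) :
    HasSum (fun n : ℕ => n * p.coeff n * x ^ n) (x * deriv p.sum x) := by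
  rw [← hasSum_nat_add_iff' 1]
  simpa [pow_succ, mul_assoc, mul_left_comm, mul_comm] using
    (hasSum_coeff_succ_mul_pow_deriv hx).mul_left x

end PowerSeries

section HypergeometricCoefficient

variable {K : Type*} [Field K]

theorem ordinaryHypergeometricCoefficient_succ (a b c : K) (n : ℕ) :
    ordinaryHypergeometricCoefficient a b c (n + 1) =
      (a + n) * (b + n) / ((n + 1) * (c + n)) * ordinaryHypergeometricCoefficient a b c n := by
  simp only [ordinaryHypergeometricCoefficient, ascPochhammer_succ_eval, Nat.factorial_succ]
  push_cast
  simp only [mul_inv, div_eq_mul_inv]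
  ring

theorem ordinaryHypergeometricCoefficient_add_one_right (a b : K) {c : K} (hc : c ≠ 0) (n : ℕ) :
    ordinaryHypergeometricCoefficient a b (c + 1) n =
      c / (c + n) * ordinaryHypergeometricCoefficient a b c n := by
  have h : (ascPochhammer K n).eval (c + 1) = (ascPochhammer K n).eval c * (c + n) / c := by
    rw [eq_div_iff hc, ← ascPochhammer_succ_eval, ascPochhammer_succ_eval_left, mul_comm]
  rw [ordinaryHypergeometricCoefficient, h]
  simp only [mul_inv, div_eq_mul_inv, inv_inv]
  ring

end HypergeometricCoefficient

section Hypergeometric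

variable {𝕂 : Type*} [RCLike 𝕂] {a b c x : 𝕂}

theorem one_le_radius_ordinaryHypergeometricSeries (a b c : 𝕂) :
    1 ≤ (ordinaryHypergeometricSeries 𝕂 a b c).radius := by
  by_cases h : ∀ k : ℕ, (k : 𝕂) ≠ -a ∧ (k : 𝕂) ≠ -b ∧ (k : 𝕂) ≠ -c
  · exact (ordinaryHypergeometricSeries_radius_eq_one 𝕂 a b c h).ge
  · obtain ⟨k, hk⟩ : ∃ k : ℕ, a = -k ∨ b = -k ∨ c = -k := by grind
    rcases hk with rfl | rfl | rfl
    · simp [ordinaryHypergeometric_radius_top_of_neg_nat₁]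
    · simp [ordinaryHypergeometric_radius_top_of_neg_nat₂]
    · simp [ordinaryHypergeometric_radius_top_of_neg_nat₃]

theorem enorm_lt_radius_ordinaryHypergeometricSeries (a b c : 𝕂) (hx : ‖x‖ < 1) :
    ‖x‖ₑ < (ordinaryHypergeometricSeries 𝕂 a b c).radius := by
  refine lt_of_lt_of_le ?_ (one_le_radius_ordinaryHypergeometricSeries a b c)
  simpa [← enorm_norm, ← ENNReal.toReal_lt_toReal] using hx

theorem differentiableAt_ordinaryHypergeometric (a b c : 𝕂) (hx : ‖x‖ < 1) :
    DifferentiableAt 𝕂 (₂F₁ a b c) x :=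
  (FormalMultilinearSeries.hasFDerivAt_sum
    (enorm_lt_radius_ordinaryHypergeometricSeries a b c hx)).differentiableAt

theorem coeff_ordinaryHypergeometricSeries (a b c : 𝕂) (n : ℕ) :
    (ordinaryHypergeometricSeries 𝕂 a b c).coeff n = ordinaryHypergeometricCoefficient a b c n :=
  FormalMultilinearSeries.coeff_ofScalars

theorem hasSum_ordinaryHypergeometricCoefficient_mul_pow (a b c : 𝕂) (hx : ‖x‖ < 1) :
    HasSum (fun n => ordinaryHypergeometricCoefficient a b c n * x ^ n) (₂F₁ a b c x) := by
  simpa only [coeff_ordinaryHypergeometricSeries, ordinaryHypergeometric] using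
    hasSum_coeff_mul_pow (enorm_lt_radius_ordinaryHypergeometricSeries a b c hx)

theorem mul_deriv_ordinaryHypergeometric_add_one (hc : ∀ n : ℕ, c + n ≠ 0) (hx : ‖x‖ < 1) :
    x * deriv (₂F₁ a b (c + 1)) x + c * ₂F₁ a b (c + 1) x = c * ₂F₁ a b c x := by
  have hc₀ : c ≠ 0 := by simpa using hc 0
  have hleft := (hasSum_natCast_mul_coeff_mul_pow
    (enorm_lt_radius_ordinaryHypergeometricSeries a b (c + 1) hx)).add
      ((hasSum_ordinaryHypergeometricCoefficient_mul_pow a b (c + 1) hx).mul_left c)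
  have hright := (hasSum_ordinaryHypergeometricCoefficient_mul_pow a b c hx).mul_left c
  refine hleft.unique (hright.congr_fun fun n => ?_)
  have hn := hc n
  rw [coeff_ordinaryHypergeometricSeries,
    ordinaryHypergeometricCoefficient_add_one_right _ _ hc₀ n]
  field

theorem one_sub_mul_deriv_ordinaryHypergeometric (hc : ∀ n : ℕ, c + n ≠ 0) (hx : ‖x‖ < 1) :
    (1 - x) * deriv (₂F₁ a b c) x =
      (a + b - c) * ₂F₁ a b c x + (c - a) * (c - b) / c * ₂F₁ a b (c + 1) x := by
  have hc₀ : c ≠ 0 := by simpa using hc 0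
  have hr := enorm_lt_radius_ordinaryHypergeometricSeries a b c hx
  have hleft := (hasSum_coeff_succ_mul_pow_deriv hr).sub (hasSum_natCast_mul_coeff_mul_pow hr)
  have hright :=
    ((hasSum_ordinaryHypergeometricCoefficient_mul_pow a b c hx).mul_left (a + b - c)).add
      ((hasSum_ordinaryHypergeometricCoefficient_mul_pow a b (c + 1) hx).mul_left
        ((c - a) * (c - b) / c))
  rw [one_sub_mul]
  refine hleft.unique (hright.congr_fun fun n => ?_)
  have hn := hc n
  have hn₁ : (n : 𝕂) + 1 ≠ 0 := n.cast_add_one_ne_zero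
  rw [coeff_ordinaryHypergeometricSeries, coeff_ordinaryHypergeometricSeries,
    ordinaryHypergeometricCoefficient_succ,
    ordinaryHypergeometricCoefficient_add_one_right _ _ hc₀ n]
  field

end Hypergeometric

section Trigonometric

variable {x : ℝ}

theorem eq_sin_mul_and_eq_cos_mul_of_hasDerivAt {a : ℝ} {f g : ℝ → ℝ} {s : Set ℝ} (hs : IsOpen s)
    (hs' : IsPreconnected s) (hf : ∀ y ∈ s, HasDerivAt f (a * g y) y)
    (hg : ∀ y ∈ s, HasDerivAt g (-(a * f y)) y) (h0 : 0 ∈ s) (hf0 : f 0 = 0) (hg0 : g 0 = 1)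
    (hx : x ∈ s) : f x = sin (a * x) ∧ g x = cos (a * x) := by
  let d : ℝ → ℝ := fun y => (f y - sin (a * y)) ^ 2 + (g y - cos (a * y)) ^ 2
  have hd : ∀ y ∈ s, HasDerivAt d 0 y := fun y hy => by
    have hay : HasDerivAt (fun y => a * y) a y := hasDerivAt_const_mul a
    refine ((((hf y hy).sub hay.sin).pow 2).add (((hg y hy).sub hay.cos).pow 2)).congr_deriv ?_
    simp only [Pi.sub_apply]
    ring
  have hdx : d x = d 0 := hs.is_const_of_deriv_eq_zero hs'
    (fun y hy => (hd y hy).differentiableAt.differentiableWithinAt)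
    (fun y hy => (hd y hy).deriv) hx h0
  have hsq : (f x - sin (a * x)) ^ 2 + (g x - cos (a * x)) ^ 2 = 0 := by
    simpa [d, hf0, hg0] using hdx
  constructor <;> nlinarith

theorem norm_sin_sq_lt_one (hx : cos x ≠ 0) : ‖sin x ^ 2‖ < 1 := by
  rw [norm_of_nonneg (sq_nonneg _), sin_sq]
  linarith [sq_pos_of_ne_zero hx]

theorem hasDerivAt_ordinaryHypergeometric_sin_sq (a b c : ℝ) (hx : cos x ≠ 0) :
    HasDerivAt (fun y => ₂F₁ a b c (sin y ^ 2))
      (deriv (₂F₁ a b c) (sin x ^ 2) * (2 * sin x * cos x)) x := by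
  have hsq : HasDerivAt (fun y => sin y ^ 2) (2 * sin x * cos x) x := by
    simpa only [Nat.cast_ofNat, Nat.add_one_sub_one, pow_one] using (hasDerivAt_sin x).fun_pow 2
  exact (differentiableAt_ordinaryHypergeometric a b c
    (norm_sin_sq_lt_one hx)).hasDerivAt.comp x hsq

theorem hasDerivAt_sin_mul_ordinaryHypergeometric (a b : ℝ) (hx : cos x ≠ 0) :
    HasDerivAt (fun y => sin y * ₂F₁ a b (3 / 2) (sin y ^ 2))
      (cos x * ₂F₁ a b (1 / 2) (sin x ^ 2)) x := by
  have h := mul_deriv_ordinaryHypergeometric_add_one (a := a) (b := b) (c := 1 / 2)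
    (fun n => by positivity) (norm_sin_sq_lt_one hx)
  rw [show (1 / 2 : ℝ) + 1 = 3 / 2 by norm_num] at h
  refine ((hasDerivAt_sin x).mul
    (hasDerivAt_ordinaryHypergeometric_sin_sq a b (3 / 2) hx)).congr_deriv ?_
  linear_combination 2 * cos x * h

theorem hasDerivAt_cos_mul_ordinaryHypergeometric (a : ℝ) (hx : cos x ≠ 0) :
    HasDerivAt (fun y => cos y * ₂F₁ ((1 + a) / 2) ((1 - a) / 2) (1 / 2) (sin y ^ 2))
      (-(a * (a * (sin x * ₂F₁ ((1 + a) / 2) ((1 - a) / 2) (3 / 2) (sin x ^ 2))))) x := by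
  have h := one_sub_mul_deriv_ordinaryHypergeometric (a := (1 + a) / 2) (b := (1 - a) / 2)
    (c := 1 / 2) (fun n => by positivity) (norm_sin_sq_lt_one hx)
  rw [show (1 / 2 : ℝ) + 1 = 3 / 2 by norm_num, ← cos_sq'] at h
  refine ((hasDerivAt_cos x).mul
    (hasDerivAt_ordinaryHypergeometric_sin_sq _ _ (1 / 2) hx)).congr_deriv ?_
  linear_combination 2 * sin x * h

theorem sin_mul_eq_ordinaryHypergeometric (a : ℝ) (hx : x ∈ Set.Ioo (-(π / 2)) (π / 2)) :
    sin (a * x) = a * (sin x * ₂F₁ ((1 + a) / 2) ((1 - a) / 2) (3 / 2) (sin x ^ 2)) := by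
  have hcos {y : ℝ} (hy : y ∈ Set.Ioo (-(π / 2)) (π / 2)) : cos y ≠ 0 :=
    (cos_pos_of_mem_Ioo hy).ne'
  refine (eq_sin_mul_and_eq_cos_mul_of_hasDerivAt isOpen_Ioo isPreconnected_Ioo
    (fun y hy => (hasDerivAt_sin_mul_ordinaryHypergeometric _ _ (hcos hy)).const_mul a)
    (fun y hy => hasDerivAt_cos_mul_ordinaryHypergeometric a (hcos hy))
    ?_ ?_ ?_ hx).1.symm <;> simp [pi_pos]

theorem sin_three_mul_eq_mul_sub (x : ℝ) :
    sin (3 * x) = sin x * (3 * cos x ^ 2 - sin x ^ 2) := by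
  rw [sin_three_mul, cos_sq']
  ring

theorem ordinaryHypergeometric_sin_three_mul_sq (hx : 3 * x ∈ Set.Ioo (-(π / 2)) (π / 2)) :
    ₂F₁ (2 / 3 : ℝ) (1 / 3) (3 / 2) (sin (3 * x) ^ 2) = 3 / (3 * cos x ^ 2 - sin x ^ 2) := by
  obtain rfl | hx₀ := eq_or_ne x 0
  · simp
  have h := sin_mul_eq_ordinaryHypergeometric (1 / 3) hx
  rw [show 1 / 3 * (3 * x) = x by ring, show (1 + 1 / 3 : ℝ) / 2 = 2 / 3 by norm_num,
    show (1 - 1 / 3 : ℝ) / 2 = 1 / 3 by norm_num] at h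
  have hsin : sin (3 * x) ≠ 0 := by
    rw [ne_eq, sin_eq_zero_iff_of_lt_of_lt (by linarith [hx.1, pi_pos])
      (by linarith [hx.2, pi_pos])]
    simpa using hx₀
  have hmul := sin_three_mul_eq_mul_sub x
  rw [hmul] at hsin
  rw [eq_div_iff (right_ne_zero_of_mul hsin)]
  refine mul_left_cancel₀ (left_ne_zero_of_mul hsin) ?_
  linear_combination -3 * h - ₂F₁ (2 / 3 : ℝ) (1 / 3) (3 / 2) (sin (3 * x) ^ 2) * hmul

end Trigonometric

theorem hasSum_gbinom_three_mul_add_one {z : ℝ} (hz : |z| < 4 / 27) :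
    HasSum (fun n : ℕ => gbinom (3 * n + 1) n * z ^ n / (3 * n + 1))
      (₂F₁ (2 / 3 : ℝ) (1 / 3) (3 / 2) (27 * z / 4)) := by
  have hw : ‖27 * z / 4‖ < 1 := by
    rw [abs_lt] at hz
    rw [norm_eq_abs, abs_lt]
    constructor <;> linarith
  refine (hasSum_ordinaryHypergeometricCoefficient_mul_pow (2 / 3) (1 / 3) (3 / 2) hw).congr_fun
    fun n => ?_
  rw [mul_div_right_comm, gbinom_three_mul_add_one_div, mul_div_right_comm 27 z, mul_pow]
  ring

theorem fuss_genfun_p_three (z : ℝ) (hz0 : 0 ≤ z) (hz : z < 4 / 27) :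
    HasSum (fun n : ℕ => gbinom (3 * (n : ℝ) + 1) n * z ^ n / (3 * (n : ℝ) + 1))
      (3 / (3 * Real.cos (Real.arcsin (Real.sqrt (27 * z / 4)) / 3) ^ 2
          - Real.sin (Real.arcsin (Real.sqrt (27 * z / 4)) / 3) ^ 2)) := by
  have hw0 : 0 ≤ 27 * z / 4 := by positivity
  have hw1 : √(27 * z / 4) < 1 := by
    rw [sqrt_lt' one_pos]
    linarith
  have hthree : 3 * (arcsin √(27 * z / 4) / 3) = arcsin √(27 * z / 4) := by ring
  have hmem : arcsin √(27 * z / 4) ∈ Set.Ioo (-(π / 2)) (π / 2) :=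
    ⟨neg_pi_div_two_lt_arcsin.mpr (by linarith [sqrt_nonneg (27 * z / 4)]),
      arcsin_lt_pi_div_two.mpr hw1⟩
  have hsin : sin (arcsin √(27 * z / 4)) ^ 2 = 27 * z / 4 := by
    rw [sin_arcsin (by linarith [sqrt_nonneg (27 * z / 4)]) hw1.le, sq_sqrt hw0]
  rw [← ordinaryHypergeometric_sin_three_mul_sq (by rwa [hthree]), hthree, hsin]
  exact hasSum_gbinom_three_mul_add_one (by rwa [abs_of_nonneg hz0])
end

section
/- For every real number r and every real z with 0 ≤ z < 4/27, the series ∑_{n≥0} C(3n+r, n) z^n converges and equals (3/(3 cos²α − sin²α))^r · 1/(cos²α − 3 sin²α), where α = (1/3)·arcsin(√(27z/4)). (Note that for such z one has 0 ≤ α < π/6, so the bases 3cos²α − sin²α and cos²α − 3sin²α are positive.) -/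
open Real

/-!
Put `z = w / (1 + w) ^ p`. For small `w > 0` the binomial series turns
`(1 + w) ^ (-r) * ∑ C(pn + r, n) z ^ n` into the double series
`∑ C(pn + r, n) C(-(pn + r), k) w ^ (n + k)`. Each antidiagonal `n + k = m + 1` is, up to a factor
`(m + 1)!`, the top finite difference of a polynomial of degree `m + 1`, so it equals
`p (p - 1) ^ m`, and the series sums to `(1 + w) / (1 - (p - 1) w)`. Comparing `C(pn + r, n)` with
the coefficients of `(1 - 1 / p) ^ (-b)` shows that the series in `z` converges for
`|z| < (p - 1) ^ (p - 1) / p ^ p`, so the identity theorem extends the formula to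
`0 ≤ w < 1 / (p - 1)`. For `p = 3` and `z = (4 / 27) sin² 3α` the parameter is
`w = 4 sin² α / (3 - 4 sin² α)`.
-/

open Filter Topology
open Finset.HasAntidiagonal (antidiagonal mem_antidiagonal)

section Gbinom

lemma gbinom_eq_descPochhammer_eval (a : ℝ) (n : ℕ) :
    gbinom a n = (descPochhammer ℝ n).eval a / n.factorial := by
  rw [gbinom, descPochhammer_eval_eq_prod_range]

lemma gbinom_eq_ringChoose (a : ℝ) (n : ℕ) : gbinom a n = Ring.choose a n := by
  rw [Ring.choose_eq_smul, gbinom_eq_descPochhammer_eval, ← Polynomial.aeval_eq_smeval,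
    Polynomial.aeval_def, Polynomial.eval₂_eq_eval_map, descPochhammer_map, smul_eq_mul,
    div_eq_inv_mul]

lemma gbinom_neg (a : ℝ) (n : ℕ) : gbinom (-a) n = (-1) ^ n * gbinom (a + n - 1) n := by
  rw [gbinom_eq_descPochhammer_eval, gbinom_eq_descPochhammer_eval,
    descPochhammer_eval_eq_ascPochhammer, ← mul_div_assoc,
    ← ascPochhammer_eval_neg_eq_descPochhammer]
  ring_nf

lemma abs_gbinom_neg (a : ℝ) (n : ℕ) : |gbinom (-a) n| = |gbinom (a + n - 1) n| := by
  simp [gbinom_neg, abs_mul]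

lemma abs_gbinom_le {a b : ℝ} (h : |a| ≤ b) (n : ℕ) : |gbinom a n| ≤ |gbinom (-b) n| := by
  simp only [gbinom, abs_div, Finset.abs_prod]
  refine div_le_div_of_nonneg_right
    (Finset.prod_le_prod (fun _ _ ↦ abs_nonneg _) fun i _ ↦ ?_) (abs_nonneg _)
  calc |a - i| ≤ |a| + |(i : ℝ)| := abs_sub _ _
    _ ≤ b + i := by rw [Nat.abs_cast]; gcongr
    _ ≤ |-b - i| := by rw [← neg_add', abs_neg]; exact le_abs_self _

lemma hasSum_gbinom_mul_pow (a : ℝ) {w : ℝ} (hw : |w| < 1) :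
    HasSum (fun n ↦ gbinom a n * w ^ n) ((1 + w) ^ a) := by
  have h := (one_add_rpow_hasFPowerSeriesOnBall_zero (a := a)).hasSum (y := w)
    (by simpa [enorm_eq_nnnorm, ← NNReal.coe_lt_coe] using hw)
  simpa [binomialSeries, gbinom_eq_ringChoose, mul_comm] using h

-- The coefficients of `(1 - t) ^ (-b)` are nonnegative, so each term is at most the whole sum.
lemma abs_gbinom_mul_pow_le {a b t : ℝ} (h : |a| ≤ b) (ht₀ : 0 ≤ t) (ht₁ : t < 1) (n : ℕ) :
    |gbinom a n| * t ^ n ≤ (1 - t) ^ (-b) := by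
  have hb : 0 ≤ b := (abs_nonneg a).trans h
  have hnonneg (k : ℕ) : gbinom (-b) k * (-t) ^ k = |gbinom (-b) k| * t ^ k := by
    have hpos : 0 ≤ gbinom (b + k - 1) k := by
      rw [gbinom_eq_descPochhammer_eval]
      exact div_nonneg (descPochhammer_nonneg (by linarith)) (Nat.cast_nonneg _)
    rw [abs_gbinom_neg, gbinom_neg, abs_of_nonneg hpos, mul_right_comm, ← mul_pow, neg_one_mul,
      neg_neg, mul_comm]
  have hsum := hasSum_gbinom_mul_pow (-b) (w := -t) (by rwa [abs_neg, abs_of_nonneg ht₀])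
  simp only [hnonneg, ← sub_eq_add_neg] at hsum
  calc |gbinom a n| * t ^ n ≤ |gbinom (-b) n| * t ^ n :=
        mul_le_mul_of_nonneg_right (abs_gbinom_le h n) (pow_nonneg ht₀ n)
    _ ≤ (1 - t) ^ (-b) := le_hasSum hsum n fun k _ ↦ by positivity

lemma abs_gbinom_le_two_rpow_mul {a b : ℝ} (h : |a| ≤ b) (n : ℕ) :
    |gbinom a n| ≤ 2 ^ b * 2 ^ n := by
  have := abs_gbinom_mul_pow_le h (t := 1 / 2) (by norm_num) (by norm_num) n
  rwa [show (1 : ℝ) - 1 / 2 = 2⁻¹ by norm_num, one_div, inv_pow, ← div_eq_mul_inv,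
    rpow_neg (by norm_num), inv_rpow (by norm_num), inv_inv, div_le_iff₀ (by positivity)] at this

end Gbinom

section Convolution

lemma descPochhammer_eval_mul_neg (a : ℝ) {i j m : ℕ} (h : i + j = m + 1) :
    (descPochhammer ℝ i).eval a * (descPochhammer ℝ j).eval (-a)
      = (-1) ^ j * (a * (ascPochhammer ℝ m).eval (a - i + 1)) := by
  have hneg : (descPochhammer ℝ j).eval (-a) = (-1) ^ j * (ascPochhammer ℝ j).eval a := by
    have := ascPochhammer_eval_neg_eq_descPochhammer ℝ (-a) j
    rw [neg_neg] at this
    rw [this, ← mul_assoc, ← mul_pow, neg_one_mul, neg_neg, one_pow, one_mul]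
  rw [hneg, mul_left_comm]
  congr 1
  cases i with
  | zero =>
    obtain rfl : j = m + 1 := by omega
    simp [ascPochhammer_succ_left]
  | succ i =>
    obtain rfl : m = i + j := by omega
    rw [descPochhammer_succ_left, ← ascPochhammer_mul]
    simp only [Polynomial.eval_mul, Polynomial.eval_X, Polynomial.eval_comp, Polynomial.eval_sub,
      Polynomial.eval_one, Polynomial.eval_add, Polynomial.eval_natCast,
      descPochhammer_eval_eq_ascPochhammer]
    push_cast
    ring_nf

open Polynomial in
lemma fwdDiff_iter_eval_of_natDegree_le {R : Type*} [CommRing R] {P : R[X]} {n : ℕ}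
    (h : P.natDegree ≤ n) (x : R) : (fwdDiff 1)^[n] P.eval x = P.coeff n * n.factorial := by
  obtain hlt | rfl := h.lt_or_eq
  · simp [fwdDiff_iter_eq_zero_of_degree_lt hlt, coeff_eq_zero_of_natDegree_lt hlt]
  · simp [fwdDiff_iter_degree_eq_factorial]

open Polynomial in
lemma natDegree_ascPochhammer_comp_linear_le {R : Type*} [CommRing R] [IsDomain R] (a b : R)
    (m : ℕ) : ((ascPochhammer R m).comp (C a * X + C b)).natDegree ≤ m := by
  refine natDegree_comp_le.trans ?_
  rw [ascPochhammer_natDegree]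
  exact mul_le_of_le_one_right m.zero_le natDegree_linear_le

open Polynomial in
lemma coeff_ascPochhammer_comp_linear {R : Type*} [CommRing R] [IsDomain R] (a b : R) (m : ℕ) :
    ((ascPochhammer R m).comp (C a * X + C b)).coeff m = a ^ m := by
  induction m with
  | zero => simp
  | succ m ih =>
    rw [ascPochhammer_succ_right, mul_comp, add_comp, X_comp, natCast_comp, add_assoc,
      ← C_eq_natCast, ← C_add, coeff_mul_add_eq_of_natDegree_le
        (natDegree_ascPochhammer_comp_linear_le a b m) natDegree_linear_le, ih, pow_succ]
    simp

open Polynomial in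
lemma fwdDiff_iter_linear_mul_ascPochhammer {R : Type*} [CommRing R] [IsDomain R]
    (a b c d x : R) (m : ℕ) :
    (fwdDiff 1)^[m + 1] ((C a * X + C b) * (ascPochhammer R m).comp (C c * X + C d)).eval x
      = a * c ^ m * (m + 1).factorial := by
  have hlin : (C a * X + C b).natDegree ≤ 1 := natDegree_linear_le
  have hasc := natDegree_ascPochhammer_comp_linear_le c d m
  rw [add_comm m 1, fwdDiff_iter_eval_of_natDegree_le (natDegree_mul_le_of_le hlin hasc),
    coeff_mul_add_eq_of_natDegree_le hlin hasc, coeff_ascPochhammer_comp_linear]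
  simp

lemma sum_antidiagonal_gbinom_mul_gbinom_neg (p r : ℝ) (m : ℕ) :
    ∑ x ∈ antidiagonal (m + 1),
      gbinom (p * x.1 + r) x.1 * gbinom (-(p * x.1 + r)) x.2 = p * (p - 1) ^ m := by
  have hdiff := fwdDiff_iter_linear_mul_ascPochhammer p r (p - 1) (r + 1) 0 m
  rw [fwdDiff_iter_eq_sum_shift] at hdiff
  refine mul_right_cancel₀ (b := ((m + 1).factorial : ℝ)) (by positivity) ?_
  rw [← hdiff, Finset.Nat.sum_antidiagonal_eq_sum_range_succ_mk, Finset.sum_mul]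
  refine Finset.sum_congr rfl fun i hi ↦ ?_
  have hi : i ≤ m + 1 := Finset.mem_range_succ_iff.1 hi
  have hfac : ((m + 1).factorial : ℝ) = (m + 1).choose i * i.factorial * (m + 1 - i).factorial :=
    mod_cast (Nat.choose_mul_factorial_mul_factorial hi).symm
  have hprod := descPochhammer_eval_mul_neg (p * i + r) (Nat.add_sub_of_le hi)
  rw [show p * (i : ℝ) + r - i + 1 = (p - 1) * i + (r + 1) by ring] at hprod
  simp only [gbinom_eq_descPochhammer_eval, div_mul_div_comm, hprod, hfac, zero_add, nsmul_eq_mul,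
    mul_one, zsmul_eq_mul, Polynomial.eval_mul, Polynomial.eval_add, Polynomial.eval_comp,
    Polynomial.eval_C, Polynomial.eval_X]
  push_cast
  field_simp

lemma hasSum_pow_mul_sum_antidiagonal_gbinom {p w : ℝ} (hpw : |(p - 1) * w| < 1) (r : ℝ) :
    HasSum (fun m : ℕ ↦ w ^ m * ∑ x ∈ antidiagonal m,
      gbinom (p * x.1 + r) x.1 * gbinom (-(p * x.1 + r)) x.2)
      ((1 + w) / (1 - (p - 1) * w)) := by
  have hne : 1 - (p - 1) * w ≠ 0 := (sub_pos.2 (abs_lt.1 hpw).2).ne'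
  rw [← hasSum_nat_add_iff' 1]
  convert! (hasSum_geometric_of_abs_lt_one hpw).mul_left (p * w) using 1
  · ext m
    rw [sum_antidiagonal_gbinom_mul_gbinom_neg, mul_pow]
    ring
  · simp only [Finset.sum_range_one, Finset.Nat.antidiagonal_zero, Finset.sum_singleton, gbinom,
      Finset.range_zero, Finset.prod_empty, Nat.factorial_zero, Nat.cast_one, pow_zero,
      div_one, mul_one]
    rw [div_sub_one hne, div_eq_mul_inv]
    ring

end Convolution

section SmallParameter

lemma hasSum_sum_antidiagonal {α : Type*} [AddCommMonoid α] [TopologicalSpace α] [ContinuousAdd α]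
    [RegularSpace α] {f : ℕ × ℕ → α} {a : α} (h : HasSum f a) :
    HasSum (fun m ↦ ∑ x ∈ antidiagonal m, f x) a := by
  refine (Finset.HasAntidiagonal.sigmaAntidiagonalEquivProd.hasSum_iff.2 h).sigma fun m ↦ ?_
  rw [← Finset.sum_coe_sort]
  exact hasSum_fintype _

lemma two_mul_add_two_le_two_rpow {p : ℝ} (hp : 0 ≤ p) : 2 * p + 2 ≤ 2 ^ (2 * p + 1) := by
  have := one_add_mul_self_le_rpow_one_add (s := 1) (by norm_num) (p := 2 * p + 1) (by linarith)
  rw [one_add_one_eq_two] at this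
  linarith

lemma summable_gbinom_mul_gbinom_neg {p w : ℝ} (hp : 0 ≤ p) (r : ℝ) (hw : 0 ≤ w)
    (hpw : 2 ^ (2 * p + 1) * w < 1) :
    Summable fun x : ℕ × ℕ ↦ (gbinom (p * x.1 + r) x.1 * w ^ x.1) *
      (gbinom (-(p * x.1 + r)) x.2 * w ^ x.2) := by
  have h2w : 2 * w < 1 :=
    (mul_le_mul_of_nonneg_right (by linarith [two_mul_add_two_le_two_rpow hp]) hw).trans_lt hpw
  have hgeom : Summable fun x : ℕ × ℕ ↦
      2 ^ (2 * |r|) * (2 ^ (2 * p + 1) * w) ^ x.1 * (2 * w) ^ x.2 :=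
    ((summable_geometric_of_lt_one (by positivity) hpw).mul_left _).mul_of_nonneg
      (summable_geometric_of_lt_one (by positivity) h2w)
      (fun _ ↦ by positivity) (fun _ ↦ by positivity)
  refine hgeom.of_norm_bounded fun ⟨n, k⟩ ↦ ?_
  have habs : |p * n + r| ≤ p * n + |r| :=
    (abs_add_le _ _).trans_eq (by rw [abs_of_nonneg (by positivity : 0 ≤ p * (n : ℝ))])
  have hpow : (2 : ℝ) ^ (2 * |r|) * (2 ^ (2 * p + 1)) ^ n
      = 2 ^ (p * n + |r|) * 2 ^ n * 2 ^ (p * n + |r|) := by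
    rw [← rpow_natCast, ← rpow_natCast, ← rpow_mul two_pos.le, ← rpow_add two_pos,
      ← rpow_add two_pos, ← rpow_add two_pos]
    ring_nf
  simp only [norm_mul, norm_pow, norm_eq_abs, abs_of_nonneg hw]
  calc |gbinom (p * n + r) n| * w ^ n * (|gbinom (-(p * n + r)) k| * w ^ k)
      ≤ 2 ^ (p * n + |r|) * 2 ^ n * w ^ n * (2 ^ (p * n + |r|) * 2 ^ k * w ^ k) := by
        gcongr
        · exact abs_gbinom_le_two_rpow_mul habs n
        · exact abs_gbinom_le_two_rpow_mul ((abs_neg _).trans_le habs) k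
    _ = 2 ^ (2 * |r|) * (2 ^ (2 * p + 1) * w) ^ n * (2 * w) ^ k := by
        rw [mul_pow, mul_pow, ← mul_assoc (2 ^ (2 * |r|)), hpow]
        ring

lemma hasSum_gbinom_mul_gbinom_neg_row (p r : ℝ) {w : ℝ} (hw : |w| < 1) (n : ℕ) :
    HasSum (fun k ↦ (gbinom (p * n + r) n * w ^ n) * (gbinom (-(p * n + r)) k * w ^ k))
      ((1 + w) ^ (-r) * (gbinom (p * n + r) n * (w / (1 + w) ^ p) ^ n)) := by
  have hpos : 0 < 1 + w := by linarith [(abs_lt.1 hw).1]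
  convert! (hasSum_gbinom_mul_pow (-(p * n + r)) hw).mul_left (gbinom (p * n + r) n * w ^ n) using 1
  rw [neg_add, rpow_add hpos, rpow_neg hpos.le (p * n), rpow_mul hpos.le, rpow_natCast, div_pow]
  ring

lemma hasSum_gbinom_mul_add_of_small {p w : ℝ} (hp : 0 ≤ p) (r : ℝ) (hw : 0 ≤ w)
    (hpw : 2 ^ (2 * p + 1) * w < 1) :
    HasSum (fun n : ℕ ↦ gbinom (p * n + r) n * (w / (1 + w) ^ p) ^ n)
      ((1 + w) ^ r * ((1 + w) / (1 - (p - 1) * w))) := by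
  have hpos : 0 < 1 + w := by positivity
  have hsmall {c : ℝ} (hc : |c| ≤ 2 * p + 2) : |c * w| < 1 := by
    rw [abs_mul, abs_of_nonneg hw]
    exact (mul_le_mul_of_nonneg_right (hc.trans (two_mul_add_two_le_two_rpow hp)) hw).trans_lt hpw
  have hw₁ : |w| < 1 := by simpa using hsmall (c := 1) (by rw [abs_one]; linarith)
  have hpw₁ : |(p - 1) * w| < 1 := hsmall (abs_le.2 ⟨by linarith, by linarith⟩)
  have hF := (summable_gbinom_mul_gbinom_neg hp r hw hpw).hasSum
  have hrows := hF.prod_fiberwise (hasSum_gbinom_mul_gbinom_neg_row p r hw₁)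
  have hdiag := hasSum_pow_mul_sum_antidiagonal_gbinom hpw₁ r
  have hdiag' := hasSum_sum_antidiagonal hF
  have hterm (m : ℕ) : ∑ x ∈ antidiagonal m, (gbinom (p * x.1 + r) x.1 * w ^ x.1) *
      (gbinom (-(p * x.1 + r)) x.2 * w ^ x.2) = w ^ m * ∑ x ∈ antidiagonal m,
        gbinom (p * x.1 + r) x.1 * gbinom (-(p * x.1 + r)) x.2 := by
    rw [Finset.mul_sum]
    refine Finset.sum_congr rfl fun x hx ↦ ?_
    rw [← mem_antidiagonal.1 hx, pow_add]
    ring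
  simp only [hterm] at hdiag'
  rw [hdiag'.unique hdiag] at hrows
  simpa only [← mul_assoc, ← rpow_add hpos, add_neg_cancel, rpow_zero, one_mul]
    using hrows.mul_left ((1 + w) ^ r)

end SmallParameter

section Continuation

/-- The power series `∑ C(pn + r, n) zⁿ`, as a formal multilinear series so that its radius of
convergence and analyticity are available. -/
noncomputable def gbinomSeries (p r : ℝ) : FormalMultilinearSeries ℝ ℝ ℝ :=
  .ofScalars ℝ fun n ↦ gbinom (p * n + r) n

/-- The critical value `(p - 1) ^ (p - 1) / p ^ p`, the maximum of `w / (1 + w) ^ p` over `w ≥ 0`,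
within which `gbinomSeries p r` converges. -/
noncomputable def gbinomRadius (p : ℝ) : ℝ := (p - 1) ^ (p - 1) / p ^ p

variable {p : ℝ}

lemma gbinomRadius_pos (hp : 1 < p) : 0 < gbinomRadius p :=
  div_pos (rpow_pos_of_pos (sub_pos.2 hp) _) (rpow_pos_of_pos (one_pos.trans hp) _)

lemma gbinomRadius_eq (hp : 1 < p) : gbinomRadius p = p⁻¹ * (1 - p⁻¹) ^ (p - 1) := by
  have hp₀ : 0 < p := one_pos.trans hp
  rw [show 1 - p⁻¹ = (p - 1) / p by field_simp, div_rpow (sub_nonneg.2 hp.le) hp₀.le,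
    inv_mul_eq_div, div_div, ← rpow_add_one hp₀.ne', sub_add_cancel, gbinomRadius]

lemma abs_gbinom_mul_gbinomRadius_pow_le (hp : 1 < p) (r : ℝ) (n : ℕ) :
    |gbinom (p * n + r) n| * gbinomRadius p ^ n ≤ (1 - p⁻¹) ^ (-|r + 1|) := by
  have hq : 0 < 1 - p⁻¹ := sub_pos.2 (inv_lt_one_of_one_lt₀ hp)
  have hrefl : |gbinom (p * n + r) n| = |gbinom (-((p - 1) * n + (r + 1))) n| := by
    rw [abs_gbinom_neg]
    ring_nf
  have habs : |-((p - 1) * n + (r + 1))| ≤ (p - 1) * n + |r + 1| := by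
    rw [abs_neg]
    refine (abs_add_le _ _).trans_eq ?_
    rw [abs_of_nonneg (mul_nonneg (sub_nonneg.2 hp.le) n.cast_nonneg)]
  have hle := abs_gbinom_mul_pow_le habs (inv_nonneg.2 (one_pos.trans hp).le)
    (inv_lt_one_of_one_lt₀ hp) n
  rw [hrefl, gbinomRadius_eq hp, mul_pow, ← rpow_mul_natCast hq.le, ← mul_assoc]
  calc _ ≤ (1 - p⁻¹) ^ (-((p - 1) * n + |r + 1|)) * (1 - p⁻¹) ^ ((p - 1) * n) := by gcongr
    _ = (1 - p⁻¹) ^ (-|r + 1|) := by rw [← rpow_add hq]; ring_nf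

lemma ofReal_gbinomRadius_le_radius (hp : 1 < p) (r : ℝ) :
    ENNReal.ofReal (gbinomRadius p) ≤ (gbinomSeries p r).radius := by
  refine (gbinomSeries p r).le_radius_of_bound ((1 - p⁻¹) ^ (-|r + 1|)) fun n ↦ ?_
  rw [coe_toNNReal _ (gbinomRadius_pos hp).le, gbinomSeries,
    FormalMultilinearSeries.ofScalars_norm, norm_eq_abs]
  exact abs_gbinom_mul_gbinomRadius_pow_le hp r n

lemma mem_eball_radius_gbinomSeries (hp : 1 < p) (r : ℝ) {z : ℝ} (hz : |z| < gbinomRadius p) :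
    z ∈ Metric.eball 0 (gbinomSeries p r).radius := by
  refine Metric.eball_subset_eball (ofReal_gbinomRadius_le_radius hp r) ?_
  rwa [Metric.eball_ofReal, mem_ball_zero_iff]

lemma analyticAt_sum_gbinomSeries (hp : 1 < p) (r : ℝ) {z : ℝ} (hz : |z| < gbinomRadius p) :
    AnalyticAt ℝ (gbinomSeries p r).sum z :=
  ((gbinomSeries p r).hasFPowerSeriesOnBall ((ENNReal.ofReal_pos.2 (gbinomRadius_pos hp)).trans_le
    (ofReal_gbinomRadius_le_radius hp r))).analyticOnNhd z (mem_eball_radius_gbinomSeries hp r hz)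

lemma hasSum_gbinomSeries (hp : 1 < p) (r : ℝ) {z : ℝ} (hz : |z| < gbinomRadius p) :
    HasSum (fun n : ℕ ↦ gbinom (p * n + r) n * z ^ n) ((gbinomSeries p r).sum z) := by
  have h := (gbinomSeries p r).hasSum (mem_eball_radius_gbinomSeries hp r hz)
  simpa only [gbinomSeries, FormalMultilinearSeries.ofScalars_apply_eq, smul_eq_mul] using h

-- Bernoulli's inequality at `1 + x = (p - 1) * (1 + w) / p`, where `1 + p * x = (p - 1) * w`.
lemma div_one_add_rpow_lt_gbinomRadius (hp : 1 < p) {w : ℝ} (hw : -1 < w)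
    (hne : (p - 1) * w ≠ 1) : w / (1 + w) ^ p < gbinomRadius p := by
  have hp₀ : 0 < p := one_pos.trans hp
  have hp₁ : 0 < p - 1 := sub_pos.2 hp
  have hw₁ : 0 < 1 + w := by linarith
  have hx : 1 + ((p - 1) * w - 1) / p = (p - 1) * (1 + w) / p := by field_simp; ring
  have hbern : (p - 1) * w < ((p - 1) * (1 + w) / p) ^ p := by
    have := one_add_mul_self_lt_rpow_one_add (s := ((p - 1) * w - 1) / p)
      (by linarith [show 0 < (p - 1) * (1 + w) / p by positivity])
      (div_ne_zero (sub_ne_zero.2 hne) hp₀.ne') hp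
    rwa [mul_div_cancel₀ _ hp₀.ne', hx, add_sub_cancel] at this
  rw [div_rpow (by positivity) hp₀.le, mul_rpow hp₁.le hw₁.le] at hbern
  rw [gbinomRadius, rpow_sub_one hp₁.ne', div_lt_iff₀ (by positivity)]
  calc w = (p - 1) * w / (p - 1) := by field_simp
    _ < (p - 1) ^ p * (1 + w) ^ p / p ^ p / (p - 1) := by gcongr
    _ = (p - 1) ^ p / (p - 1) / p ^ p * (1 + w) ^ p := by ring

lemma abs_div_one_add_rpow_lt_gbinomRadius (hp : 1 < p) {w : ℝ} (hw : 0 ≤ w)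
    (hpw : (p - 1) * w < 1) : |w / (1 + w) ^ p| < gbinomRadius p := by
  rw [abs_of_nonneg (by positivity)]
  exact div_one_add_rpow_lt_gbinomRadius hp (by linarith) hpw.ne

lemma analyticOnNhd_one_add_rpow (q : ℝ) :
    AnalyticOnNhd ℝ (fun v : ℝ ↦ (1 + v) ^ q) (Set.Ioi (-1)) :=
  fun v hv ↦ (ContDiffAt.rpow_const_of_ne (by fun_prop)
    (by linarith [Set.mem_Ioi.1 hv] : 0 < 1 + v).ne').analyticAt

lemma analyticAt_sum_gbinomSeries_div_one_add_rpow (hp : 1 < p) (r : ℝ) {w : ℝ} (hw : 0 ≤ w)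
    (hpw : (p - 1) * w < 1) :
    AnalyticAt ℝ (fun v ↦ (gbinomSeries p r).sum (v / (1 + v) ^ p)) w :=
  (analyticAt_sum_gbinomSeries hp r (abs_div_one_add_rpow_lt_gbinomRadius hp hw hpw)).comp_of_eq
    (analyticAt_id.div (analyticOnNhd_one_add_rpow p w (neg_one_lt_zero.trans_le hw))
      (by positivity)) rfl

lemma eventually_sum_gbinomSeries_eq (hp : 1 < p) (r : ℝ) :
    ∀ᶠ w in 𝓝[>] (0 : ℝ), (gbinomSeries p r).sum (w / (1 + w) ^ p)
      = (1 + w) ^ r * ((1 + w) / (1 - (p - 1) * w)) := by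
  have hsmall (c : ℝ) : ∀ᶠ w in 𝓝[>] (0 : ℝ), c * w < 1 :=
    (((continuous_const_mul c).tendsto' 0 0 (mul_zero c)).mono_left nhdsWithin_le_nhds)
      |>.eventually_lt_const one_pos
  filter_upwards [self_mem_nhdsWithin, hsmall (p - 1), hsmall (2 ^ (2 * p + 1))] with w hw hpw hpw'
  have hw₀ : 0 ≤ w := (Set.mem_Ioi.1 hw).le
  exact (hasSum_gbinomSeries hp r (abs_div_one_add_rpow_lt_gbinomRadius hp hw₀ hpw)).unique
    (hasSum_gbinom_mul_add_of_small (by linarith) r hw₀ hpw')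

theorem hasSum_gbinom_mul_add (hp : 1 < p) (r : ℝ) {w : ℝ} (hw : 0 ≤ w) (hpw : (p - 1) * w < 1) :
    HasSum (fun n : ℕ ↦ gbinom (p * n + r) n * (w / (1 + w) ^ p) ^ n)
      ((1 + w) ^ r * ((1 + w) / (1 - (p - 1) * w))) := by
  have hp₁ : 0 < p - 1 := sub_pos.2 hp
  have hlhs : AnalyticOnNhd ℝ (fun v ↦ (gbinomSeries p r).sum (v / (1 + v) ^ p))
      (Set.Ico 0 (1 / (p - 1))) := fun v hv ↦
    analyticAt_sum_gbinomSeries_div_one_add_rpow hp r hv.1 ((lt_div_iff₀' hp₁).1 hv.2)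
  have hrhs : AnalyticOnNhd ℝ (fun v ↦ (1 + v) ^ r * ((1 + v) / (1 - (p - 1) * v)))
      (Set.Ico 0 (1 / (p - 1))) := fun v hv ↦
    (analyticOnNhd_one_add_rpow r v (neg_one_lt_zero.trans_le hv.1)).mul
      ((by fun_prop : AnalyticAt ℝ (fun v ↦ 1 + v) v).div (by fun_prop)
        (sub_pos.2 ((lt_div_iff₀' hp₁).1 hv.2)).ne')
  have heq : (gbinomSeries p r).sum (w / (1 + w) ^ p)
      = (1 + w) ^ r * ((1 + w) / (1 - (p - 1) * w)) :=
    hlhs.eqOn_of_preconnected_of_frequently_eq hrhs isPreconnected_Ico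
      (Set.left_mem_Ico.2 (one_div_pos.2 hp₁))
      ((eventually_sum_gbinomSeries_eq hp r).frequently.filter_mono
        (nhdsWithin_mono _ fun _ hv ↦ hv.ne'))
      ⟨hw, (lt_div_iff₀' hp₁).2 hpw⟩
  exact heq ▸ hasSum_gbinomSeries hp r (abs_div_one_add_rpow_lt_gbinomRadius hp hw hpw)

end Continuation

section Trigonometric

lemma hasSum_gbinom_three_mul_add_sin_sq (r : ℝ) {α : ℝ} (hα : 4 * sin α ^ 2 < 1) :
    HasSum (fun n : ℕ ↦ gbinom (3 * n + r) n * (4 / 27 * sin (3 * α) ^ 2) ^ n)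
      ((3 / (3 * cos α ^ 2 - sin α ^ 2)) ^ r * (1 / (cos α ^ 2 - 3 * sin α ^ 2))) := by
  rw [cos_sq', sin_three_mul]
  set s := sin α
  have hden : 0 < 3 - 4 * s ^ 2 := by linarith
  have hden' : 1 - 4 * s ^ 2 ≠ 0 := by linarith
  have hw : 1 + 4 * s ^ 2 / (3 - 4 * s ^ 2) = 3 / (3 - 4 * s ^ 2) := by field_simp; ring
  have hw' : 1 - (3 - 1) * (4 * s ^ 2 / (3 - 4 * s ^ 2))
      = 3 * (1 - 4 * s ^ 2) / (3 - 4 * s ^ 2) := by field_simp; ring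
  have hpw : (3 - 1) * (4 * s ^ 2 / (3 - 4 * s ^ 2)) < 1 := by
    rw [← mul_div_assoc, div_lt_one hden]
    linarith
  convert! hasSum_gbinom_mul_add (p := 3) (by norm_num) r (by positivity) hpw using 1
  · ext n
    rw [hw, rpow_ofNat]
    congr 2
    field_simp
    ring
  · rw [hw, hw']
    congr 1
    · congr 2
      ring
    · rw [show 1 - s ^ 2 - 3 * s ^ 2 = 1 - 4 * s ^ 2 by ring]
      field_simp

lemma four_mul_sin_sq_lt_one {α : ℝ} (hα : |α| < π / 6) : 4 * sin α ^ 2 < 1 := by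
  obtain ⟨hα₁, hα₂⟩ := abs_lt.1 hα
  have hlower : -(1 / 2) < sin α := by
    rw [← sin_pi_div_six, ← sin_neg]
    exact sin_lt_sin_of_lt_of_le_pi_div_two (by linarith [pi_pos]) (by linarith [pi_pos]) hα₁
  have hupper : sin α < 1 / 2 := by
    rw [← sin_pi_div_six]
    exact sin_lt_sin_of_lt_of_le_pi_div_two (by linarith [pi_pos]) (by linarith [pi_pos]) hα₂
  nlinarith

end Trigonometric

theorem binom_genfun_p_three (r z : ℝ) (hz0 : 0 ≤ z) (hz : z < 4 / 27) :
    ∀ α : ℝ, α = Real.arcsin (Real.sqrt (27 * z / 4)) / 3 →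
      HasSum (fun n : ℕ => gbinom (3 * (n : ℝ) + r) n * z ^ n)
        ((3 / (3 * Real.cos α ^ 2 - Real.sin α ^ 2)) ^ r
          * (1 / (Real.cos α ^ 2 - 3 * Real.sin α ^ 2))) := by
  rintro α rfl
  have hnonneg : 0 ≤ √(27 * z / 4) := sqrt_nonneg _
  have hlt : √(27 * z / 4) < 1 := (sqrt_lt' one_pos).2 (by linarith)
  have hα : |arcsin √(27 * z / 4) / 3| < π / 6 := by
    rw [abs_of_nonneg (div_nonneg (arcsin_nonneg.2 hnonneg) zero_le_three)]
    linarith [arcsin_lt_pi_div_two.2 hlt]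
  have hz_eq : z = 4 / 27 * sin (3 * (arcsin √(27 * z / 4) / 3)) ^ 2 := by
    rw [mul_div_cancel₀ _ three_ne_zero, sin_arcsin (by linarith) hlt.le, sq_sqrt (by positivity)]
    ring
  have hsum := hasSum_gbinom_three_mul_add_sin_sq r (four_mul_sin_sq_lt_one hα)
  rwa [← hz_eq] at hsum
end

section
/- For every real number r > −1 and every natural number n, C(3n+r, n) = [((1+r)/3)_n · ((2+r)/3)_n · ((3+r)/3)_n · 27^n] / [((1+r)/2)_n · ((2+r)/2)_n · 4^n · n!], where (a)_n denotes the Pochhammer symbol. -/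
/-- Pochhammer symbol `(a)_n = a(a+1)⋯(a+n-1)`. -/
noncomputable def poch (a : ℝ) (n : ℕ) : ℝ :=
  ∏ i ∈ Finset.range n, (a + i)

/-!
Since `3n + r - (n - 1) = (1 + r) + 2n`, the falling factorial of `3n + r` of length `n` consists of
the last `n` factors of `(1 + r)_{3n}`, so that `C(3n+r, n) = (1 + r)_{3n} / ((1 + r)_{2n} n!)`.
Sorting the factors of `(a)_{mn}` by the residue of their index modulo `m` gives
`(a)_{mn} = m^{mn} ∏_{j < m} ((a + j)/m)_n`, which is applied with `m = 3` and `m = 2`.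
-/

open Finset

theorem ascPochhammer_eval_eq_prod_range_s4 {S : Type*} [CommSemiring S] (n : ℕ) (a : S) :
    (ascPochhammer S n).eval a = ∏ i ∈ range n, (a + i) := by
  induction n with
  | zero => simp
  | succ n ih => rw [ascPochhammer_succ_eval, ih, prod_range_succ]

theorem ascPochhammer_eval_add_right {S : Type*} [CommSemiring S] (m n : ℕ) (a : S) :
    (ascPochhammer S (m + n)).eval a =
      (ascPochhammer S m).eval a * (ascPochhammer S n).eval (a + m) := by
  simp [← ascPochhammer_mul]

theorem ascPochhammer_eval_mul_right {K : Type*} [Field K] {m : ℕ} (hm : (m : K) ≠ 0) (n : ℕ)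
    (a : K) :
    (ascPochhammer K (m * n)).eval a =
      (∏ j ∈ range m, (ascPochhammer K n).eval ((a + j) / m)) * (m : K) ^ (m * n) := by
  induction n with
  | zero => simp
  | succ n ih =>
    have last_factors : (ascPochhammer K m).eval (a + (m * n : ℕ)) =
        (∏ j ∈ range m, ((a + j) / m + n)) * (m : K) ^ m := by
      rw [ascPochhammer_eval_eq_prod_range_s4, pow_eq_prod_const, ← prod_mul_distrib]
      refine prod_congr rfl fun j _ => ?_
      push_cast
      field_simp
      ring
    simp only [Nat.mul_succ, ascPochhammer_eval_add_right, ih, last_factors,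
      ascPochhammer_succ_eval, prod_mul_distrib, pow_add]
    ring

theorem poch_eq_ascPochhammer_eval (a : ℝ) (n : ℕ) : poch a n = (ascPochhammer ℝ n).eval a :=
  (ascPochhammer_eval_eq_prod_range_s4 n a).symm

theorem gbinom_eq_poch_div_factorial (a : ℝ) (n : ℕ) :
    gbinom a n = poch (a - n + 1) n / n.factorial := by
  rw [gbinom, ← descPochhammer_eval_eq_prod_range, descPochhammer_eval_eq_ascPochhammer,
    poch_eq_ascPochhammer_eval]

theorem gbinom_add_eq_poch_div_poch {r : ℝ} {m : ℕ} (h : poch (1 + r) m ≠ 0) (n : ℕ) :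
    gbinom ((m + n : ℕ) + r) n = poch (1 + r) (m + n) / (poch (1 + r) m * n.factorial) := by
  have first_factor : ((m + n : ℕ) + r) - n + 1 = 1 + r + m := by push_cast; ring
  have split : poch (1 + r) (m + n) = poch (1 + r) m * poch (1 + r + m) n := by
    simp only [poch_eq_ascPochhammer_eval, ascPochhammer_eval_add_right]
  rw [gbinom_eq_poch_div_factorial, first_factor, split, mul_div_mul_left _ _ h]

theorem poch_two_mul (a : ℝ) (n : ℕ) :
    poch a (2 * n) = poch (a / 2) n * poch ((a + 1) / 2) n * 4 ^ n := by
  have power : (4 : ℝ) = 2 ^ 2 := by norm_num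
  simpa [poch_eq_ascPochhammer_eval, prod_range_succ, pow_mul, power] using
    ascPochhammer_eval_mul_right (m := 2) (by norm_num) n a

theorem poch_three_mul (a : ℝ) (n : ℕ) :
    poch a (3 * n) =
      poch (a / 3) n * poch ((a + 1) / 3) n * poch ((a + 2) / 3) n * 27 ^ n := by
  have power : (27 : ℝ) = 3 ^ 3 := by norm_num
  simpa [poch_eq_ascPochhammer_eval, prod_range_succ, pow_mul, power] using
    ascPochhammer_eval_mul_right (m := 3) (by norm_num) n a

theorem binom_three_pochhammer_general (r : ℝ) (n : ℕ) (hr : ∀ k < 2 * n, 1 + r + k ≠ 0) :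
    gbinom (3 * (n : ℝ) + r) n
      = (poch ((1 + r) / 3) n * poch ((2 + r) / 3) n * poch ((3 + r) / 3) n * 27 ^ n)
        / (poch ((1 + r) / 2) n * poch ((2 + r) / 2) n * 4 ^ n * (n.factorial : ℝ)) := by
  have denominator_ne_zero : poch (1 + r) (2 * n) ≠ 0 :=
    prod_ne_zero_iff.mpr fun k hk => hr k (mem_range.mp hk)
  calc gbinom (3 * (n : ℝ) + r) n
      = gbinom ((2 * n + n : ℕ) + r) n := by congr 1; push_cast; ring
    _ = poch (1 + r) (3 * n) / (poch (1 + r) (2 * n) * n.factorial) := by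
      rw [gbinom_add_eq_poch_div_poch denominator_ne_zero, ← Nat.succ_mul]
    _ = _ := by
      have add_one_eq : 1 + r + 1 = 2 + r := by ring
      have add_two_eq : 1 + r + 2 = 3 + r := by ring
      rw [poch_three_mul, poch_two_mul, add_one_eq, add_two_eq]

theorem binom_three_pochhammer (r : ℝ) (hr : -1 < r) (n : ℕ) :
    gbinom (3 * (n : ℝ) + r) n
      = (poch ((1 + r) / 3) n * poch ((2 + r) / 3) n * poch ((3 + r) / 3) n * 27 ^ n)
        / (poch ((1 + r) / 2) n * poch ((2 + r) / 2) n * 4 ^ n * (n.factorial : ℝ)) :=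
  binom_three_pochhammer_general r n fun k _ =>
    ne_of_gt (by linarith [k.cast_nonneg (α := ℝ)])
end

section
/- For every real number z with 0 ≤ z < 2/(3√3), the series ∑_{n≥0} C(3n/2 + 1, n) z^n/(3n/2 + 1) converges and equals 3/(√3 cos β − sin β)², where β = (1/3)·arcsin(3√3 z/2). -/
open Real

/-!
Write `B` for the solution of `B = 1 + z * B ^ (3 / 2)` with `B = 1` at `z = 0`. The coefficients
of its powers `B ^ r` satisfy a two-step recurrence which, for `r = -1 / 2` and (up to the constant
term) `r = -1`, collapses after rescaling `z` to `(n + 2) (n + 1) c (n + 2) = (n² - k²) c n`, the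
recurrence of the power series in `sin t` of a combination of `cos (k t)` and `sin (k t)`. This
identifies `B ^ (-1 / 2)` with `u = cos β - sin β / √3` and `B⁻¹` with `u ^ 2`. The relation
`B ^ (r + 1) = B ^ r + z * B ^ (r + 3 / 2)`, which holds coefficientwise, then climbs to the
exponents `1 / 2` and `1`.
-/

open Filter Set FormalMultilinearSeries Metric

open scoped ENNReal

section PowerSeries

lemma summable_of_norm_add_two_eventually_le {E : Type*} [SeminormedAddCommGroup E]
    [CompleteSpace E] {f : ℕ → E} {r : ℝ} (hr : r < 1)
    (h : ∀ᶠ n in atTop, ‖f (n + 2)‖ ≤ r * ‖f n‖) : Summable f := by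
  have tendsto_two_mul : Tendsto (fun m : ℕ => 2 * m) atTop atTop :=
    tendsto_id.const_mul_atTop' two_pos
  refine Summable.even_add_odd (summable_of_ratio_norm_eventually_le hr ?_)
    (summable_of_ratio_norm_eventually_le hr ?_)
  · exact tendsto_two_mul.eventually h
  · exact (tendsto_add_atTop_nat 1 |>.comp tendsto_two_mul).eventually h

variable {𝕜 : Type*} [NontriviallyNormedField 𝕜] {f : 𝕜 → 𝕜} {c : ℕ → 𝕜} {r : ℝ≥0∞} {s : 𝕜}

lemma hasSum_of_hasFPowerSeriesOnBall_ofScalars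
    (h : HasFPowerSeriesOnBall f (ofScalars 𝕜 c) 0 r) (hs : s ∈ eball 0 r) :
    HasSum (fun n => c n * s ^ n) (f s) := by
  simpa [ofScalars_apply_eq, mul_comm] using h.hasSum hs

variable [CompleteSpace 𝕜]

lemma hasFPowerSeriesOnBall_deriv_ofScalars {x : 𝕜}
    (h : HasFPowerSeriesOnBall f (ofScalars 𝕜 c) x r) :
    HasFPowerSeriesOnBall (deriv f) (ofScalars 𝕜 fun n => ((n : 𝕜) + 1) * c (n + 1)) x r := by
  set L := ContinuousLinearMap.apply 𝕜 𝕜 (1 : 𝕜)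
  have series_eq : L.compFormalMultilinearSeries (ofScalars 𝕜 c).derivSeries =
      ofScalars 𝕜 fun n => ((n : 𝕜) + 1) * c (n + 1) := by
    refine FormalMultilinearSeries.ext fun n => ContinuousMultilinearMap.ext_ring ?_
    change (ofScalars 𝕜 c).derivSeries.coeff n 1 =
      (ofScalars 𝕜 fun n => ((n : 𝕜) + 1) * c (n + 1)).coeff n
    rw [derivSeries_coeff_one, coeff_ofScalars, coeff_ofScalars, nsmul_eq_mul, Nat.cast_succ]
  exact series_eq ▸ L.comp_hasFPowerSeriesOnBall h.fderiv

lemma hasSum_natCast_mul_of_hasFPowerSeriesOnBall_ofScalars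
    (h : HasFPowerSeriesOnBall f (ofScalars 𝕜 c) 0 r) (hs : s ∈ eball 0 r) :
    HasSum (fun n : ℕ => n * c n * s ^ n) (s * deriv f s) := by
  rw [← hasSum_nat_add_iff' 1]
  convert! (hasSum_of_hasFPowerSeriesOnBall_ofScalars
    (hasFPowerSeriesOnBall_deriv_ofScalars h) hs).mul_left s using 1
  · funext n
    push_cast
    ring
  · simp

lemma hasSum_natCast_sq_mul_of_hasFPowerSeriesOnBall_ofScalars
    (h : HasFPowerSeriesOnBall f (ofScalars 𝕜 c) 0 r) (hs : s ∈ eball 0 r) :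
    HasSum (fun n : ℕ => (n : 𝕜) ^ 2 * c n * s ^ n)
      (s * deriv f s + s ^ 2 * deriv (deriv f) s) := by
  have first := hasSum_of_hasFPowerSeriesOnBall_ofScalars
    (hasFPowerSeriesOnBall_deriv_ofScalars h) hs
  have second := hasSum_natCast_mul_of_hasFPowerSeriesOnBall_ofScalars
    (hasFPowerSeriesOnBall_deriv_ofScalars h) hs
  rw [← hasSum_nat_add_iff' 1]
  convert! (first.add second).mul_left s using 1
  · funext n
    push_cast
    ring
  · simp only [Finset.sum_range_one, Nat.cast_zero, ne_eq, two_ne_zero, not_false_eq_true,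
      zero_pow, zero_mul, sub_zero]
    ring

end PowerSeries

section TrigonometricSeries

variable {c : ℕ → ℝ} {k t : ℝ}

lemma summable_mul_pow_of_recurrence
    (hc : ∀ n : ℕ, ((n : ℝ) + 2) * (n + 1) * c (n + 2) = ((n : ℝ) ^ 2 - k ^ 2) * c n)
    {x : ℝ} (hx : |x| < 1) : Summable fun n => c n * x ^ n := by
  refine summable_of_norm_add_two_eventually_le ((sq_lt_one_iff_abs_lt_one x).2 hx) ?_
  filter_upwards [eventually_ge_atTop ⌈k ^ 2⌉₊] with n hn
  have hkn : k ^ 2 ≤ n := Nat.ceil_le.1 hn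
  have factor_le : |(n : ℝ) ^ 2 - k ^ 2| ≤ ((n : ℝ) + 2) * (n + 1) := by
    rw [abs_le]
    constructor <;> nlinarith [sq_nonneg k]
  have coeff_le : |c (n + 2)| ≤ |c n| := by
    have pos : 0 < ((n : ℝ) + 2) * (n + 1) := by positivity
    refine le_of_mul_le_mul_left ?_ pos
    calc ((n : ℝ) + 2) * (n + 1) * |c (n + 2)| = |(n : ℝ) ^ 2 - k ^ 2| * |c n| := by
          rw [← abs_mul, ← hc n, abs_mul, abs_of_pos pos]
      _ ≤ ((n : ℝ) + 2) * (n + 1) * |c n| := by gcongr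
  calc ‖c (n + 2) * x ^ (n + 2)‖ = x ^ 2 * (|c (n + 2)| * |x ^ n|) := by
        rw [pow_add, norm_eq_abs, abs_mul, abs_mul, abs_sq]
        ring
    _ ≤ x ^ 2 * (|c n| * |x ^ n|) := by gcongr
    _ = x ^ 2 * ‖c n * x ^ n‖ := by rw [norm_eq_abs, abs_mul]

lemma hasFPowerSeriesOnBall_ofScalars_sum_of_recurrence
    (hc : ∀ n : ℕ, ((n : ℝ) + 2) * (n + 1) * c (n + 2) = ((n : ℝ) ^ 2 - k ^ 2) * c n) :
    HasFPowerSeriesOnBall (ofScalars ℝ c).sum (ofScalars ℝ c) 0 1 := by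
  have one_le_radius : 1 ≤ (ofScalars ℝ c).radius := by
    refine ENNReal.le_of_forall_nnreal_lt fun q hq => le_radius_of_summable_norm _ ?_
    have hq' : |(q : ℝ)| < 1 := by simpa using hq
    refine (summable_mul_pow_of_recurrence hc hq').norm.congr fun n => ?_
    simp
  exact ((ofScalars ℝ c).hasFPowerSeriesOnBall (one_pos.trans_le one_le_radius)).mono one_pos
    one_le_radius

lemma deriv_deriv_of_hasFPowerSeriesOnBall_of_recurrence {f : ℝ → ℝ} {r : ℝ≥0∞} {s : ℝ}
    (hc : ∀ n : ℕ, ((n : ℝ) + 2) * (n + 1) * c (n + 2) = ((n : ℝ) ^ 2 - k ^ 2) * c n)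
    (h : HasFPowerSeriesOnBall f (ofScalars ℝ c) 0 r) (hs : s ∈ eball 0 r) :
    (1 - s ^ 2) * deriv (deriv f) s - s * deriv f s = -k ^ 2 * f s := by
  have lhs := hasSum_of_hasFPowerSeriesOnBall_ofScalars
    (hasFPowerSeriesOnBall_deriv_ofScalars (hasFPowerSeriesOnBall_deriv_ofScalars h)) hs
  have rhs := (hasSum_natCast_sq_mul_of_hasFPowerSeriesOnBall_ofScalars h hs).sub
    ((hasSum_of_hasFPowerSeriesOnBall_ofScalars h hs).mul_left (k ^ 2))
  have := lhs.unique <| rhs.congr_fun fun n => by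
    push_cast
    linear_combination s ^ n * hc n
  linarith

/-- The combinations of `(g, g')` constant along the flow are its coordinates in the frame
rotating with angular velocity `k`. -/
lemma eq_cos_add_sin_of_hasDerivAt {I : Set ℝ} (hI : IsOpen I) (hI' : IsPreconnected I)
    (h0 : 0 ∈ I) {g g' : ℝ → ℝ} (hk : k ≠ 0) (hg : ∀ x ∈ I, HasDerivAt g (g' x) x)
    (hg' : ∀ x ∈ I, HasDerivAt g' (-k ^ 2 * g x) x) (ht : t ∈ I) :
    g t = g 0 * cos (k * t) + g' 0 / k * sin (k * t) := by
  have eq_at_zero : ∀ F : ℝ → ℝ, (∀ x ∈ I, HasDerivAt F 0 x) → F t = F 0 := fun F hF =>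
    hI.is_const_of_deriv_eq_zero hI'
      (fun x hx => (hF x hx).differentiableAt.differentiableWithinAt)
      (fun x hx => (hF x hx).deriv) ht h0
  have hasDerivAt_mul_left : ∀ x, HasDerivAt (fun x => k * x) k x := fun x => by
    simpa using (hasDerivAt_id x).const_mul k
  have first := eq_at_zero (fun x => k * (g x * cos (k * x)) - g' x * sin (k * x)) fun x hx => by
    convert! (((hg x hx).mul (hasDerivAt_mul_left x).cos).const_mul k).sub
      ((hg' x hx).mul (hasDerivAt_mul_left x).sin) using 1
    ring
  have second := eq_at_zero (fun x => k * (g x * sin (k * x)) + g' x * cos (k * x)) fun x hx => by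
    convert! (((hg x hx).mul (hasDerivAt_mul_left x).sin).const_mul k).add
      ((hg' x hx).mul (hasDerivAt_mul_left x).cos) using 1
    ring
  simp only [mul_zero, cos_zero, sin_zero, mul_one, sub_zero, zero_add] at first second
  field_simp
  linear_combination cos (k * t) * first + sin (k * t) * second
    - k * g t * sin_sq_add_cos_sq (k * t)

lemma abs_sin_lt_one (ht : t ∈ Ioo (-(π / 2)) (π / 2)) : |sin t| < 1 := by
  rw [← sq_lt_one_iff_abs_lt_one, sin_sq]
  linarith [pow_pos (cos_pos_of_mem_Ioo ht) 2]

theorem hasSum_mul_sin_pow_of_recurrence (hk : k ≠ 0)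
    (hc : ∀ n : ℕ, ((n : ℝ) + 2) * (n + 1) * c (n + 2) = ((n : ℝ) ^ 2 - k ^ 2) * c n)
    (ht : t ∈ Ioo (-(π / 2)) (π / 2)) :
    HasSum (fun n => c n * sin t ^ n) (c 0 * cos (k * t) + c 1 / k * sin (k * t)) := by
  set f := (ofScalars ℝ c).sum
  have hf : HasFPowerSeriesOnBall f (ofScalars ℝ c) 0 1 :=
    hasFPowerSeriesOnBall_ofScalars_sum_of_recurrence hc
  have hf' := hasFPowerSeriesOnBall_deriv_ofScalars hf
  have sin_mem : ∀ x ∈ Ioo (-(π / 2)) (π / 2), sin x ∈ eball (0 : ℝ) 1 := fun x hx => by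
    simpa [← ofReal_norm, ENNReal.ofReal_lt_one] using abs_sin_lt_one hx
  have zero_mem : (0 : ℝ) ∈ Ioo (-(π / 2)) (π / 2) := ⟨by linarith [pi_pos], by linarith [pi_pos]⟩
  have hg : ∀ x ∈ Ioo (-(π / 2)) (π / 2),
      HasDerivAt (fun x => f (sin x)) (deriv f (sin x) * cos x) x := fun x hx =>
    (hf.analyticAt_of_mem (sin_mem x hx)).differentiableAt.hasDerivAt.comp x (hasDerivAt_sin x)
  have hg' : ∀ x ∈ Ioo (-(π / 2)) (π / 2),
      HasDerivAt (fun x => deriv f (sin x) * cos x) (-k ^ 2 * f (sin x)) x := fun x hx => by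
    convert! ((hf'.analyticAt_of_mem (sin_mem x hx)).differentiableAt.hasDerivAt.comp x
      (hasDerivAt_sin x)).mul (hasDerivAt_cos x) using 1
    rw [← deriv_deriv_of_hasFPowerSeriesOnBall_of_recurrence hc hf (sin_mem x hx), ← cos_sq']
    simp only [Function.comp_apply]
    ring
  have f_zero : f 0 = c 0 := by simpa using (hf.coeff_zero 0).symm
  have deriv_f_zero : deriv f 0 = c 1 := by simpa using (hf'.coeff_zero 0).symm
  have closed_form :=
    eq_cos_add_sin_of_hasDerivAt isOpen_Ioo isPreconnected_Ioo zero_mem hk hg hg' ht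
  rw [sin_zero, cos_zero, mul_one, f_zero, deriv_f_zero] at closed_form
  exact closed_form ▸ hasSum_of_hasFPowerSeriesOnBall_ofScalars hf (sin_mem t ht)

end TrigonometricSeries

section FussCoefficients

lemma gbinom_succ (a : ℝ) (n : ℕ) : gbinom a (n + 1) = (a - n) / (n + 1) * gbinom a n := by
  simp only [gbinom, Finset.prod_range_succ, Nat.factorial_succ, Nat.cast_mul, Nat.cast_succ]
  field_simp

lemma gbinom_add_one_succ (a : ℝ) (n : ℕ) :
    gbinom (a + 1) (n + 1) = (a + 1) / (n + 1) * gbinom a n := by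
  simp only [gbinom, Finset.prod_range_succ', Nat.factorial_succ, Nat.cast_mul, Nat.cast_succ,
    Nat.cast_zero, sub_zero, add_sub_add_right_eq_sub]
  field_simp

lemma sub_mul_gbinom_add_one (a : ℝ) (n : ℕ) :
    (a + 1 - n) * gbinom (a + 1) n = (a + 1) * gbinom a n := by
  have h := (gbinom_succ (a + 1) n).symm.trans (gbinom_add_one_succ a n)
  field_simp at h
  exact h

/-- The Fuss–Catalan (Raney) number `r / (p n + r) * C(p n + r, n)`, which is the coefficient of
`z ^ n` in `B ^ r`, where `B = 1 + z * B ^ p`. Cancelling the factor `p n + r` of the binomial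
coefficient makes the definition correct also where `p n + r = 0`. -/
noncomputable def fussCoeff (p r : ℝ) : ℕ → ℝ
  | 0 => 1
  | n + 1 => r / (n + 1) * gbinom (p * (n + 1) + r - 1) n

@[simp]
lemma fussCoeff_zero_right (p r : ℝ) : fussCoeff p r 0 = 1 := rfl

@[simp]
lemma fussCoeff_one_right (p r : ℝ) : fussCoeff p r 1 = r := by simp [fussCoeff, gbinom]

lemma fussCoeff_two_right (p r : ℝ) : fussCoeff p r 2 = r * (2 * p + r - 1) / 2 := by
  simp only [fussCoeff, gbinom, Finset.prod_range_one, Nat.factorial_one, Nat.cast_one,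
    Nat.cast_zero, sub_zero, div_one]
  ring

lemma fussCoeff_eq_gbinom {p r : ℝ} {n : ℕ} (hr : r ≠ 0) (h : p * n + r ≠ 0) :
    fussCoeff p r n = r / (p * n + r) * gbinom (p * n + r) n := by
  cases n with
  | zero => simp [gbinom, hr]
  | succ n =>
    have pascal := gbinom_add_one_succ (p * (n + 1) + r - 1) n
    rw [sub_add_cancel] at pascal
    push_cast at h ⊢
    rw [pascal, fussCoeff, ← mul_assoc, div_mul_div_cancel₀ h]

lemma fussCoeff_add_one_succ (p r : ℝ) (n : ℕ) :
    fussCoeff p (r + 1) (n + 1) = fussCoeff p r (n + 1) + fussCoeff p (r + p) n := by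
  cases n with
  | zero => simp
  | succ n =>
    set a := p * (n + 2) + r - 1 with ha
    have h₁ : fussCoeff p (r + 1) (n + 2) = (r + 1) / (n + 2) * gbinom (a + 1) (n + 1) := by
      simp only [fussCoeff, ha]
      push_cast
      ring_nf
    have h₂ : fussCoeff p r (n + 2) = r / (n + 2) * gbinom a (n + 1) := by
      simp only [fussCoeff, ha]
      push_cast
      ring_nf
    have h₃ : fussCoeff p (r + p) (n + 1) = (r + p) / (n + 1) * gbinom a n := by
      simp only [fussCoeff, ha]
      ring_nf
    rw [h₁, h₂, h₃, gbinom_add_one_succ, gbinom_succ, ha]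
    field_simp
    ring

lemma fussCoeff_three_halves_add_two (r : ℝ) (n : ℕ) :
    ((n : ℝ) + 2) * (n + 1) * (n / 2 + r + 1) * fussCoeff (3 / 2) r (n + 2) =
      (3 * n / 2 + r + 2) * (3 * n / 2 + r + 1) * (3 * n / 2 + r) * fussCoeff (3 / 2) r n := by
  cases n with
  | zero =>
    simp only [Nat.cast_zero, zero_add, fussCoeff_zero_right, fussCoeff_two_right]
    ring
  | succ n =>
    set a := 3 / 2 * ((n : ℝ) + 1) + r - 1 with ha
    have h₁ : fussCoeff (3 / 2) r (n + 3) = r / (n + 3) * gbinom (a + 1 + 1 + 1) (n + 1 + 1) := by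
      simp only [fussCoeff, ha]
      push_cast
      ring_nf
    have h₂ : fussCoeff (3 / 2) r (n + 1) = r / (n + 1) * gbinom a n := rfl
    have h₃ := sub_mul_gbinom_add_one a n
    calc _ = r * (a + 3) * (a + 2) / (n + 1) * ((a + 1 - n) * gbinom (a + 1) n) := by
          rw [h₁, gbinom_add_one_succ, gbinom_add_one_succ, ha]
          push_cast
          field_simp
          ring
      _ = _ := by
          rw [h₃, h₂, ha]
          push_cast
          ring

end FussCoefficients

section GeneratingFunctions

lemma hasSum_fussCoeff_zero (p z : ℝ) : HasSum (fun n => fussCoeff p 0 n * z ^ n) 1 := by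
  convert hasSum_single (f := fun n => fussCoeff p 0 n * z ^ n) 0 fun n hn => ?_ using 1
  · simp
  · obtain ⟨m, rfl⟩ := Nat.exists_eq_succ_of_ne_zero hn
    simp [fussCoeff]

lemma hasSum_fussCoeff_add_of_hasSum {p r z a b : ℝ} (hz : z ≠ 0)
    (ha : HasSum (fun n => fussCoeff p (r + 1) n * z ^ n) a)
    (hb : HasSum (fun n => fussCoeff p r n * z ^ n) b) :
    HasSum (fun n => fussCoeff p (r + p) n * z ^ n) ((a - b) / z) := by
  have shifted := ((hasSum_nat_add_iff' 1).2 (ha.sub hb)).div_const z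
  convert! shifted using 1
  · funext n
    rw [fussCoeff_add_one_succ]
    field_simp
    ring
  · simp

/-- The radius of convergence of the generating functions of `fussCoeff (3 / 2) r`, `r ≠ 0`. -/
noncomputable def fussRadius : ℝ := 2 / (3 * √3)

lemma inv_sqrt_three_sq : (√3)⁻¹ ^ 2 = 1 / 3 := by
  rw [inv_pow, sq_sqrt zero_le_three, one_div]

lemma fussRadius_sq : fussRadius ^ 2 = 4 / 27 := by
  rw [fussRadius]
  linear_combination 4 / 9 * inv_sqrt_three_sq

/-- The branch of the solution `u` of `u - u ^ 3 = z` with `u = 1` at `z = 0`, in terms of the angle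
`x` with `sin (3 x) = z / fussRadius`; it is `B ^ (-1/2)` for `B = 1 + z * B ^ (3/2)`. -/
noncomputable def fussRoot (x : ℝ) : ℝ := cos x - sin x / √3

lemma fussRoot_sub_pow_three (x : ℝ) :
    fussRoot x - fussRoot x ^ 3 = fussRadius * sin (3 * x) := by
  rw [fussRoot, fussRadius, sin_three_mul]
  linear_combination (3 * sin x * (√3)⁻¹ - cos x) * sin_sq_add_cos_sq x +
    (sin x ^ 3 * (√3)⁻¹ - 3 * cos x * sin x ^ 2) * inv_sqrt_three_sq

variable {t : ℝ}

lemma hasSum_fussCoeff_neg_half (ht : t ∈ Ioo (-(π / 2)) (π / 2)) :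
    HasSum (fun n => fussCoeff (3 / 2) (-1 / 2) n * (fussRadius * sin t) ^ n)
      (fussRoot (t / 3)) := by
  have recurrence (n : ℕ) : ((n : ℝ) + 2) * (n + 1) *
      (fussCoeff (3 / 2) (-1 / 2) (n + 2) * fussRadius ^ (n + 2)) =
      ((n : ℝ) ^ 2 - (1 / 3) ^ 2) * (fussCoeff (3 / 2) (-1 / 2) n * fussRadius ^ n) := by
    refine mul_left_cancel₀ (by positivity : ((n : ℝ) + 1) / 2 ≠ 0) ?_
    rw [pow_add, fussRadius_sq]
    linear_combination 4 / 27 * fussRadius ^ n * fussCoeff_three_halves_add_two (-1 / 2) n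
  convert! hasSum_mul_sin_pow_of_recurrence (by norm_num)
    (c := fun n => fussCoeff (3 / 2) (-1 / 2) n * fussRadius ^ n) recurrence ht using 1
  · funext n
    rw [mul_pow, mul_assoc]
  · simp only [fussCoeff_zero_right, fussCoeff_one_right, fussRadius, fussRoot,
      one_div_mul_eq_div]
    ring

/-- Since `u ^ 2 = 2 / 3 + cos (2 β) / 3 - sin (2 β) / √3`, the trigonometric recurrence holds
only once `2 / 3` is subtracted from the constant coefficient. -/
lemma hasSum_fussCoeff_neg_one (ht : t ∈ Ioo (-(π / 2)) (π / 2)) :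
    HasSum (fun n => fussCoeff (3 / 2) (-1) n * (fussRadius * sin t) ^ n)
      (fussRoot (t / 3) ^ 2) := by
  set c : ℕ → ℝ := fun n => fussCoeff (3 / 2) (-1) n * fussRadius ^ n - if n = 0 then 2 / 3 else 0
    with hc
  have c_zero : c 0 = 1 / 3 := by norm_num [hc]
  have c_one : c 1 = -fussRadius := by simp [hc]
  have c_succ (n : ℕ) : c (n + 1) = fussCoeff (3 / 2) (-1) (n + 1) * fussRadius ^ (n + 1) := by
    simp [hc]
  have recurrence (n : ℕ) :
      ((n : ℝ) + 2) * (n + 1) * c (n + 2) = ((n : ℝ) ^ 2 - (2 / 3) ^ 2) * c n := by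
    rw [c_succ (n + 1), add_assoc, one_add_one_eq_two, pow_add, fussRadius_sq]
    cases n with
    | zero => norm_num [c_zero, fussCoeff_two_right]
    | succ n =>
      have h := fussCoeff_three_halves_add_two (-1) (n + 1)
      rw [c_succ]
      push_cast at h ⊢
      refine mul_left_cancel₀ (by positivity : ((n : ℝ) + 1) / 2 ≠ 0) ?_
      linear_combination 4 / 27 * fussRadius ^ (n + 1) * h
  convert! (hasSum_mul_sin_pow_of_recurrence (by norm_num) recurrence ht).add
    (hasSum_ite_eq 0 (2 / 3)) using 1
  · funext n
    cases n <;> simp [hc, mul_pow, mul_assoc]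
  · rw [c_zero, c_one, show 2 / 3 * t = 2 * (t / 3) by ring, cos_two_mul, sin_two_mul, fussRoot,
      fussRadius]
    linear_combination 1 / 3 * sin_sq_add_cos_sq (t / 3) + sin (t / 3) ^ 2 * inv_sqrt_three_sq

theorem hasSum_fussCoeff_one (ht : t ∈ Ioo (-(π / 2)) (π / 2)) :
    HasSum (fun n => fussCoeff (3 / 2) 1 n * (fussRadius * sin t) ^ n)
      (1 / fussRoot (t / 3) ^ 2) := by
  rcases eq_or_ne t 0 with rfl | ht0
  · convert! hasSum_single (f := fun n => fussCoeff (3 / 2) 1 n * (fussRadius * sin 0) ^ n) 0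
      fun n hn => by simp [hn] using 1
    simp [fussRoot]
  have sin_ne_zero : sin t ≠ 0 :=
    mt (sin_eq_zero_iff_of_lt_of_lt (by linarith [ht.1, pi_pos]) (by linarith [ht.2, pi_pos])).1 ht0
  set z := fussRadius * sin t
  set u := fussRoot (t / 3) with hu
  have hz : z = u - u ^ 3 := by rw [fussRoot_sub_pow_three, mul_div_cancel₀ t three_ne_zero]
  have z_ne_zero : z ≠ 0 := mul_ne_zero (by unfold fussRadius; positivity) sin_ne_zero
  have u_ne_zero : u ≠ 0 := fun h => z_ne_zero (by simp [hz, h])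
  have half : HasSum (fun n => fussCoeff (3 / 2) (-1 / 2 + 1) n * z ^ n) (1 / u) := by
    convert! hasSum_fussCoeff_add_of_hasSum z_ne_zero (p := 3 / 2) (r := -1)
      (by simpa using hasSum_fussCoeff_zero (3 / 2) z) (hasSum_fussCoeff_neg_one ht) using 1
    · norm_num
    · rw [eq_div_iff z_ne_zero, hz, ← hu]
      field_simp
  convert! hasSum_fussCoeff_add_of_hasSum z_ne_zero (p := 3 / 2) (r := -1 / 2)
    half (hasSum_fussCoeff_neg_half ht) using 1
  · norm_num
  · rw [eq_div_iff z_ne_zero, hz, ← hu]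
    field_simp

end GeneratingFunctions

theorem fuss_genfun_p_three_halves_general (z : ℝ) (hz : |z| < 2 / (3 * √3)) :
    ∀ β : ℝ, β = arcsin (3 * √3 * z / 2) / 3 →
      HasSum (fun n : ℕ => gbinom (3 * (n : ℝ) / 2 + 1) n * z ^ n / (3 * (n : ℝ) / 2 + 1))
        (3 / (√3 * cos β - sin β) ^ 2) := by
  rintro β rfl
  set s := 3 * √3 * z / 2 with hs
  have hs1 : |s| < 1 := by
    rw [lt_div_iff₀ (by positivity)] at hz
    rw [hs, abs_div, abs_mul, abs_of_pos (by positivity), abs_two]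
    linarith
  obtain ⟨neg_one_lt, lt_one⟩ := abs_lt.1 hs1
  have hz' : fussRadius * sin (arcsin s) = z := by
    rw [sin_arcsin neg_one_lt.le lt_one.le, fussRadius, hs]
    field_simp
  convert! hasSum_fussCoeff_one
    ⟨neg_pi_div_two_lt_arcsin.2 neg_one_lt, arcsin_lt_pi_div_two.2 lt_one⟩ using 1
  · funext n
    rw [hz', fussCoeff_eq_gbinom one_ne_zero (by positivity)]
    ring_nf
  · have h : √3 * cos (arcsin s / 3) - sin (arcsin s / 3) = √3 * fussRoot (arcsin s / 3) := by
      rw [fussRoot]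
      field_simp
    rw [h, mul_pow, sq_sqrt zero_le_three, ← div_div, div_self three_ne_zero]

theorem fuss_genfun_p_three_halves (z : ℝ) (hz0 : 0 ≤ z)
    (hz : z < 2 / (3 * Real.sqrt 3)) :
    ∀ β : ℝ, β = Real.arcsin (3 * Real.sqrt 3 * z / 2) / 3 →
      HasSum (fun n : ℕ => gbinom (3 * (n : ℝ) / 2 + 1) n * z ^ n / (3 * (n : ℝ) / 2 + 1))
        (3 / (Real.sqrt 3 * Real.cos β - Real.sin β) ^ 2) :=
  fuss_genfun_p_three_halves_general z (by rwa [abs_of_nonneg hz0])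
end

section
/- Let k, l be integers with 1 ≤ l < k, set p = k/l, let r > −1 be real, and let m be a natural number. Define α_j := j/l for 1 ≤ j ≤ l, α_j := (r + j − l)/(k − l) for l+1 ≤ j ≤ k, and β_j := (r + j)/k for 1 ≤ j ≤ k. Then C(mp + r, m) = (1/√(2πl)) · (p/(p−1))^{r+1/2} · [∏_{j=1}^{k} Γ(β_j + m/l) / ∏_{j=1}^{k} Γ(α_j + m/l)] · c(p)^m, where c(p) := p^p (p−1)^{1−p} and Γ is the Gamma function. -/
open Real

/-!
With `x = mp + r` the binomial coefficient is `Γ(x + 1) / (Γ(m + 1) Γ(x - m + 1))`. Gauss's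
multiplication formula splits these three Gamma values into products of length `k`, `l` and `k - l`,
whose arguments are the `βⱼ + m/l` and the `αⱼ + m/l`; the powers of `2π`, `k`, `l` and `k - l` it
produces make up the prefactor.

The multiplication formula comes from Euler's limit: the approximants of `∏ Γ(s + j/n)` and of
`Γ(ns)` differ by an explicit power and a factor independent of `s`, and `s = 1/n` determines that
factor through the reflection formula and `∏ 2 sin(πj/n) = n`.
-/

theorem prod_two_mul_sin_pi_mul_div (n : ℕ) :
    ∏ j ∈ Finset.range n, 2 * sin (π * ((j + 1) / (n + 1))) = (n + 1 : ℝ) := by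
  have hζ := Complex.isPrimitiveRoot_exp (n + 1) n.succ_ne_zero
  have factor (j : ℕ) (hj : j ∈ Finset.range n) :
      ‖1 - Complex.exp (2 * π * Complex.I / (n + 1 : ℕ)) ^ (j + 1)‖ =
        2 * sin (π * ((j + 1) / (n + 1))) := by
    have hj' : (j + 1 : ℝ) / (n + 1) ≤ 1 :=
      div_le_one_of_le₀ (by exact_mod_cast Nat.succ_le_succ (Finset.mem_range.mp hj).le)
        (by positivity)
    have hangle : ((j + 1 : ℕ) : ℂ) * (2 * π * Complex.I / (n + 1 : ℕ)) =
        Complex.I * ((2 * (π * ((j + 1) / (n + 1))) : ℝ) : ℂ) := by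
      push_cast
      ring
    rw [norm_sub_rev, ← Complex.exp_nat_mul, hangle, Complex.norm_exp_I_mul_ofReal_sub_one,
      mul_div_cancel_left₀ _ two_ne_zero, norm_of_nonneg]
    exact mul_nonneg zero_le_two
      (sin_nonneg_of_nonneg_of_le_pi (by positivity) (mul_le_of_le_one_right pi_pos.le hj'))
  calc ∏ j ∈ Finset.range n, 2 * sin (π * ((j + 1) / (n + 1)))
      = ‖∏ j ∈ Finset.range n, (1 - Complex.exp (2 * π * Complex.I / (n + 1 : ℕ)) ^ (j + 1))‖ := by
        rw [norm_prod, Finset.prod_congr rfl factor]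
    _ = n + 1 := by
        rw [hζ.prod_one_sub_pow_eq_order]
        exact_mod_cast Complex.norm_natCast (n + 1)

theorem sq_prod_Gamma_div (n : ℕ) :
    (∏ j ∈ Finset.range n, Gamma ((j + 1) / (n + 1))) ^ 2 = (2 * π) ^ n / (n + 1) := by
  have reflect : ∏ j ∈ Finset.range n, Gamma ((j + 1) / (n + 1)) =
      ∏ j ∈ Finset.range n, Gamma (1 - (j + 1) / (n + 1)) := by
    rw [← Finset.prod_range_reflect]
    refine Finset.prod_congr rfl fun j hj ↦ ?_
    have hcast : ((n - 1 - j : ℕ) : ℝ) = n - 1 - j := by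
      rw [Nat.sub_sub, Nat.cast_sub (by grind)]
      push_cast
      ring
    rw [hcast]
    congr 1
    field
  calc (∏ j ∈ Finset.range n, Gamma ((j + 1) / (n + 1))) ^ 2
      = ∏ j ∈ Finset.range n, Gamma ((j + 1) / (n + 1)) * Gamma (1 - (j + 1) / (n + 1)) := by
        rw [Finset.prod_mul_distrib, ← reflect, sq]
    _ = ∏ j ∈ Finset.range n, 2 * π / (2 * sin (π * ((j + 1) / (n + 1)))) :=
        Finset.prod_congr rfl fun j _ ↦ by
          rw [Gamma_mul_Gamma_one_sub, mul_div_mul_left _ _ two_ne_zero]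
    _ = (2 * π) ^ n / (n + 1) := by
        rw [Finset.prod_div_distrib, prod_two_mul_sin_pi_mul_div, Finset.prod_const,
          Finset.card_range]

theorem prod_Gamma_div {n : ℕ} (hn : n ≠ 0) :
    ∏ j ∈ Finset.range n, Gamma ((j + 1) / n) =
      (2 * π) ^ (((n : ℝ) - 1) / 2) * (n : ℝ) ^ (-1 / 2 : ℝ) := by
  obtain ⟨n, rfl⟩ := Nat.exists_eq_succ_of_ne_zero hn
  have hpos : 0 ≤ ∏ j ∈ Finset.range n, Gamma ((j + 1) / (n + 1)) :=
    Finset.prod_nonneg fun j _ ↦ Gamma_nonneg_of_nonneg (by positivity)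
  have hlast : Gamma ((n + 1) / (n + 1)) = 1 := by rw [div_self (by positivity), Gamma_one]
  push_cast
  rw [Finset.prod_range_succ, hlast, mul_one, ← sqrt_sq hpos, sq_prod_Gamma_div, sqrt_eq_rpow,
    div_rpow (by positivity) (by positivity), ← rpow_natCast, ← rpow_mul (by positivity),
    div_eq_mul_inv, ← rpow_neg (by positivity)]
  ring_nf

theorem prod_range_mul_eq_prod_prod {M : Type*} [CommMonoid M] (f : ℕ → M) (a b : ℕ) :
    ∏ q ∈ Finset.range (a * b), f q =
      ∏ j ∈ Finset.range a, ∏ i ∈ Finset.range b, f (a * i + j) := by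
  rw [Finset.prod_comm]
  induction b with
  | zero => simp
  | succ b ih => rw [Nat.mul_succ, Finset.prod_range_add, ih, Finset.prod_range_succ]

theorem prod_prod_range_add_div_add {K : Type*} [Field K] {a : ℕ} (ha : (a : K) ≠ 0) (b : ℕ)
    (s : K) :
    ∏ j ∈ Finset.range a, ∏ i ∈ Finset.range b, (s + j / a + i) =
      (∏ q ∈ Finset.range (a * b), (a * s + q)) / a ^ (a * b) := by
  have hpow : (a : K) ^ (a * b) = ∏ _q ∈ Finset.range (a * b), (a : K) := by
    rw [Finset.prod_const, Finset.card_range]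
  rw [hpow, ← Finset.prod_div_distrib, prod_range_mul_eq_prod_prod]
  refine Finset.prod_congr rfl fun j _ ↦ Finset.prod_congr rfl fun i _ ↦ ?_
  push_cast
  field

theorem exists_prod_GammaSeq_eq (d : ℕ) : ∃ A : ℕ → ℂ, ∀ n ≠ 0, ∀ s : ℂ,
    ∏ j ∈ Finset.range (d + 1), Complex.GammaSeq (s + j / (d + 1 : ℂ)) n =
      A n * ((n / ((d + 1) * n + d) : ℝ) : ℂ) ^ ((d + 1) * s) *
        Complex.GammaSeq ((d + 1) * s) ((d + 1) * n + d) := by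
  refine ⟨fun n ↦ (∏ j ∈ Finset.range (d + 1), (n : ℂ) ^ (j / (d + 1 : ℂ))) *
    n.factorial ^ (d + 1) * (d + 1) ^ ((d + 1) * (n + 1)) / ((d + 1) * n + d).factorial,
    fun n hn s ↦ ?_⟩
  have hn' : (n : ℂ) ≠ 0 := Nat.cast_ne_zero.mpr hn
  have hM : (((d + 1) * n + d : ℕ) : ℂ) ≠ 0 := by
    exact_mod_cast (show (d + 1) * n + d ≠ 0 by simp [hn])
  have numer : ∏ j ∈ Finset.range (d + 1), (n : ℂ) ^ (s + j / (d + 1 : ℂ)) =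
      (n : ℂ) ^ ((d + 1) * s) * ∏ j ∈ Finset.range (d + 1), (n : ℂ) ^ (j / (d + 1 : ℂ)) := by
    rw [show (d + 1 : ℂ) * s = (d + 1 : ℕ) * s by push_cast; rfl, Complex.cpow_nat_mul]
    simp only [Complex.cpow_add _ _ hn', Finset.prod_mul_distrib, Finset.prod_const,
      Finset.card_range]
  have ratio : ((n / ((d + 1) * n + d) : ℝ) : ℂ) ^ ((d + 1) * s) =
      (n : ℂ) ^ ((d + 1) * s) / (((d + 1) * n + d : ℕ) : ℂ) ^ ((d + 1) * s) := by
    rw [Complex.ofReal_div, Complex.div_cpow_ofReal_nonneg (by positivity) (by positivity)]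
    push_cast
    rfl
  have denom := prod_prod_range_add_div_add (K := ℂ) (a := d + 1)
    (Nat.cast_ne_zero.mpr d.succ_ne_zero) (n + 1) s
  push_cast at denom
  simp only [Complex.GammaSeq, Finset.prod_div_distrib, Finset.prod_mul_distrib, denom, numer,
    ratio, Finset.prod_const, Finset.card_range]
  rw [show (d + 1) * n + d + 1 = (d + 1) * (n + 1) by ring]
  have hMs : (((d + 1) * n + d : ℕ) : ℂ) ^ ((d + 1) * s) ≠ 0 :=
    fun h ↦ hM (Complex.cpow_eq_zero_iff _ _ |>.mp h).1
  have hfact : (((d + 1) * n + d).factorial : ℂ) ≠ 0 :=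
    Nat.cast_ne_zero.mpr (Nat.factorial_ne_zero _)
  field_simp

theorem tendsto_natCast_div_mul_add (d : ℕ) :
    Filter.Tendsto (fun n : ℕ ↦ (n / ((d + 1) * n + d) : ℝ)) Filter.atTop
      (nhds (1 / (d + 1))) := by
  simpa [add_comm] using
    tendsto_add_mul_div_add_mul_atTop_nhds (0 : ℝ) d 1 (Nat.cast_add_one_ne_zero d)

theorem tendsto_cpow_mul_GammaSeq (d : ℕ) (w : ℂ) :
    Filter.Tendsto
      (fun n : ℕ ↦ ((n / ((d + 1) * n + d) : ℝ) : ℂ) ^ w * Complex.GammaSeq w ((d + 1) * n + d))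
      Filter.atTop (nhds ((d + 1 : ℂ) ^ (-w) * Complex.Gamma w)) := by
  have hindex : Filter.Tendsto (fun n ↦ (d + 1) * n + d) Filter.atTop Filter.atTop :=
    Filter.tendsto_atTop_mono
      (fun n ↦ (Nat.le_mul_of_pos_left n d.succ_pos).trans (Nat.le_add_right _ d)) Filter.tendsto_id
  have hbase : ((1 / (d + 1) : ℝ) : ℂ) ^ w = (d + 1 : ℂ) ^ (-w) := by
    rw [one_div, Complex.ofReal_inv, Complex.inv_cpow_ofReal_nonneg (by positivity),
      Complex.cpow_neg]
    push_cast
    rfl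
  rw [← hbase]
  exact ((Complex.continuousAt_ofReal_cpow_const _ w (Or.inr (by positivity))).tendsto.comp
    (tendsto_natCast_div_mul_add d)).mul ((Complex.GammaSeq_tendsto_Gamma w).comp hindex)

-- The identity is symmetric in `s` and `t` so that the unknown factor `A n` cancels before the
-- limit: neither its convergence nor its non-vanishing is needed.
theorem prod_complexGamma_add_div_mul_comm (d : ℕ) (s t : ℂ) :
    (∏ j ∈ Finset.range (d + 1), Complex.Gamma (s + j / (d + 1 : ℂ))) *
        ((d + 1 : ℂ) ^ (-((d + 1) * t)) * Complex.Gamma ((d + 1) * t)) =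
      (∏ j ∈ Finset.range (d + 1), Complex.Gamma (t + j / (d + 1 : ℂ))) *
        ((d + 1 : ℂ) ^ (-((d + 1) * s)) * Complex.Gamma ((d + 1) * s)) := by
  obtain ⟨A, hA⟩ := exists_prod_GammaSeq_eq d
  have hprod (z : ℂ) := tendsto_finsetProd (Finset.range (d + 1)) fun j _ ↦
    Complex.GammaSeq_tendsto_Gamma (z + j / (d + 1 : ℂ))
  refine tendsto_nhds_unique_of_eventuallyEq
    ((hprod s).mul (tendsto_cpow_mul_GammaSeq d ((d + 1) * t)))
    ((hprod t).mul (tendsto_cpow_mul_GammaSeq d ((d + 1) * s))) ?_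
  filter_upwards [Filter.eventually_ne_atTop 0] with n hn
  rw [hA n hn s, hA n hn t]
  ring

theorem prod_complexGamma_add_div {n : ℕ} (hn : n ≠ 0) (s : ℂ) :
    ∏ j ∈ Finset.range n, Complex.Gamma (s + j / n) =
      (2 * π : ℂ) ^ (((n : ℂ) - 1) / 2) * (n : ℂ) ^ (1 / 2 - n * s) * Complex.Gamma (n * s) := by
  have hn' : (n : ℂ) ≠ 0 := Nat.cast_ne_zero.mpr hn
  have hconst : ∏ j ∈ Finset.range n, Complex.Gamma ((n : ℂ)⁻¹ + j / n) =
      (2 * π : ℂ) ^ (((n : ℂ) - 1) / 2) * (n : ℂ) ^ (-1 / 2 : ℂ) := by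
    have h := congrArg Complex.ofReal (prod_Gamma_div hn)
    rw [Complex.ofReal_mul, Complex.ofReal_cpow (by positivity),
      Complex.ofReal_cpow (by positivity)] at h
    push_cast [← Complex.Gamma_ofReal] at h
    simpa only [add_comm, add_div, one_div] using h
  have hcomm := prod_complexGamma_add_div_mul_comm (n - 1) s (n : ℂ)⁻¹
  rw [← Nat.cast_add_one, Nat.sub_add_cancel (Nat.one_le_iff_ne_zero.mpr hn), hconst,
    mul_inv_cancel₀ hn', Complex.cpow_neg_one, Complex.Gamma_one, mul_one,
    mul_inv_eq_iff_eq_mul₀ hn'] at hcomm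
  rw [hcomm, show 1 / 2 - n * s = -1 / 2 + -(n * s) + 1 by ring, Complex.cpow_add _ _ hn',
    Complex.cpow_add _ _ hn', Complex.cpow_one]
  ring

theorem prod_realGamma_add_div {n : ℕ} (hn : n ≠ 0) (s : ℝ) :
    ∏ j ∈ Finset.range n, Gamma (s + j / n) =
      (2 * π) ^ (((n : ℝ) - 1) / 2) * (n : ℝ) ^ (1 / 2 - n * s) * Gamma (n * s) := by
  rw [← Complex.ofReal_inj, Complex.ofReal_mul, Complex.ofReal_mul,
    Complex.ofReal_cpow (by positivity), Complex.ofReal_cpow (by positivity)]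
  simpa [← Complex.Gamma_ofReal] using prod_complexGamma_add_div hn s

theorem prod_Icc_Gamma_add_div {n : ℕ} (hn : n ≠ 0) (x : ℝ) :
    ∏ j ∈ Finset.Icc 1 n, Gamma ((x + j) / n) =
      (2 * π) ^ (((n : ℝ) - 1) / 2) * (n : ℝ) ^ (-(x + 1 / 2)) * Gamma (x + 1) := by
  have h := prod_realGamma_add_div hn ((x + 1) / n)
  rw [mul_div_cancel₀ _ (Nat.cast_ne_zero.mpr hn),
    show 1 / 2 - (x + 1) = -(x + 1 / 2) by ring] at h
  rw [← h, ← Finset.Ico_add_one_right_eq_Icc, Finset.prod_Ico_eq_prod_range, Nat.add_sub_cancel]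
  exact Finset.prod_congr rfl fun j _ ↦ by rw [← add_div, add_assoc, Nat.cast_add, Nat.cast_one]

theorem prod_range_sub_mul_Gamma (x : ℝ) (m : ℕ) (hx : ∀ i < m, x ≠ i) :
    (∏ i ∈ Finset.range m, (x - i)) * Gamma (x - m + 1) = Gamma (x + 1) := by
  induction m with
  | zero => simp
  | succ m ih =>
    rw [← ih fun i hi ↦ hx i (hi.trans m.lt_succ_self), Finset.prod_range_succ,
      Gamma_add_one (sub_ne_zero.mpr (hx m m.lt_succ_self)), Nat.cast_succ,
      show x - (m + 1) + 1 = x - m by ring, mul_assoc]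

theorem gbinom_eq_Gamma_div (x : ℝ) (m : ℕ) (hx : ∀ n : ℕ, x - m + 1 ≠ -n) :
    gbinom x m = Gamma (x + 1) / (Gamma (m + 1) * Gamma (x - m + 1)) := by
  have hx' (i : ℕ) (hi : i < m) : x ≠ i := by
    rintro rfl
    obtain ⟨n, rfl⟩ := Nat.exists_eq_add_of_lt hi
    exact hx n (by push_cast; ring)
  rw [gbinom, Gamma_nat_eq_factorial, ← prod_range_sub_mul_Gamma x m hx',
    mul_div_mul_right _ _ (Gamma_ne_zero hx)]

theorem gbinom_eq_prod_Gamma_div {l d : ℕ} (hl : l ≠ 0) (hd : d ≠ 0) (x : ℝ) (m : ℕ)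
    (hx : ∀ n : ℕ, x - m + 1 ≠ -n) :
    gbinom x m =
      (l + d : ℝ) ^ (x + 1 / 2) /
          (√(2 * π) * (l : ℝ) ^ (m + 1 / 2 : ℝ) * (d : ℝ) ^ (x - m + 1 / 2)) *
        ((∏ j ∈ Finset.Icc 1 (l + d), Gamma ((x + j) / (l + d))) /
          ((∏ j ∈ Finset.Icc 1 l, Gamma ((m + j) / l)) *
            ∏ j ∈ Finset.Icc 1 d, Gamma ((x - m + j) / d))) := by
  have hl' : (0 : ℝ) < l := by positivity
  have hd' : (0 : ℝ) < d := by positivity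
  have hsqrt : (2 * π) ^ (((l + d : ℝ) - 1) / 2) =
      (2 * π) ^ (((l : ℝ) - 1) / 2) * (2 * π) ^ (((d : ℝ) - 1) / 2) * √(2 * π) := by
    rw [sqrt_eq_rpow, ← rpow_add (by positivity), ← rpow_add (by positivity)]
    ring_nf
  have hβ := prod_Icc_Gamma_add_div (n := l + d) (by lia) x
  rw [Nat.cast_add] at hβ
  rw [hβ, prod_Icc_Gamma_add_div hl m, prod_Icc_Gamma_add_div hd (x - m), hsqrt,
    gbinom_eq_Gamma_div x m hx, rpow_neg (by positivity), rpow_neg hl'.le, rpow_neg hd'.le]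
  field

theorem prefactor_eq_rpow_div {l d p : ℝ} (hl : 0 < l) (hd : 0 < d) (hp : p = (l + d) / l)
    (r : ℝ) (m : ℕ) :
    1 / √(2 * π * l) * (p / (p - 1)) ^ (r + 1 / 2) * (p ^ p * (p - 1) ^ (1 - p)) ^ m =
      (l + d) ^ (m * p + r + 1 / 2) /
        (√(2 * π) * l ^ (m + 1 / 2 : ℝ) * d ^ (m * p + r - m + 1 / 2)) := by
  have hk : 0 < l + d := add_pos hl hd
  have hp_sub_one : p - 1 = d / l := by rw [hp]; field
  have hquot : p / (p - 1) = (l + d) / d := by rw [hp_sub_one, hp]; field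
  have hc : p ^ p * (p - 1) ^ (1 - p) = (l + d) ^ p / (l * d ^ (p - 1)) := by
    have hpow : l ^ p * l ^ (1 - p) = l := by rw [← rpow_add hl, add_sub_cancel, rpow_one]
    nth_rw 1 [hp, hp_sub_one]
    rw [div_rpow hk.le hl.le, div_rpow hd.le hl.le, div_mul_div_comm, hpow, ← neg_sub p 1,
      rpow_neg hd.le]
    field
  have hk_pow : (l + d) ^ (m * p + r + 1 / 2) = (l + d) ^ (r + 1 / 2) * ((l + d) ^ p) ^ m := by
    rw [← rpow_mul_natCast hk.le, ← rpow_add hk]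
    ring_nf
  have hd_pow : d ^ (m * p + r - m + 1 / 2) = d ^ (r + 1 / 2) * (d ^ (p - 1)) ^ m := by
    rw [← rpow_mul_natCast hd.le, ← rpow_add hd]
    ring_nf
  have hl_pow : l ^ (m + 1 / 2 : ℝ) = l ^ m * √l := by
    rw [rpow_add hl, rpow_natCast, sqrt_eq_rpow]
  rw [hquot, hc, hk_pow, hd_pow, hl_pow, div_rpow hk.le hd.le, sqrt_mul (by positivity), div_pow,
    mul_pow]
  field

theorem prod_Icc_one_add {M : Type*} [CommMonoid M] (f : ℕ → M) (a b : ℕ) :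
    ∏ j ∈ Finset.Icc 1 (a + b), f j =
      (∏ j ∈ Finset.Icc 1 a, f j) * ∏ j ∈ Finset.Icc 1 b, f (a + j) := by
  induction b with
  | zero => simp
  | succ b ih =>
    rw [← add_assoc, Finset.prod_Icc_succ_top (by lia), ih, Finset.prod_Icc_succ_top (by lia),
      mul_assoc, add_assoc]

theorem binom_gamma_product_general (k l : ℕ) (hl : 1 ≤ l) (hlk : l < k)
    (p : ℝ) (hp : p = (k : ℝ) / (l : ℝ)) (r : ℝ) (m : ℕ)
    (hr : ∀ n : ℕ, m * (p - 1) + r + 1 ≠ -n)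
    (α β : ℕ → ℝ)
    (hα : ∀ j, 1 ≤ j → j ≤ k →
      α j = if j ≤ l then (j : ℝ) / l else (r + j - l) / ((k : ℝ) - l))
    (hβ : ∀ j, 1 ≤ j → j ≤ k → β j = (r + j) / k) :
    gbinom ((m : ℝ) * p + r) m
      = (1 / Real.sqrt (2 * Real.pi * l)) * (p / (p - 1)) ^ (r + 1/2) *
        ((∏ j ∈ Finset.Icc 1 k, Real.Gamma (β j + (m : ℝ) / l))
          / (∏ j ∈ Finset.Icc 1 k, Real.Gamma (α j + (m : ℝ) / l))) *
        (p ^ p * (p - 1) ^ (1 - p)) ^ m := by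
  obtain ⟨d, rfl⟩ := Nat.exists_eq_add_of_le hlk.le
  have hl' : (0 : ℝ) < l := by positivity
  have hd' : (0 : ℝ) < d := by exact_mod_cast (by lia : 0 < d)
  rw [Nat.cast_add] at hp
  have hprod_β : ∏ j ∈ Finset.Icc 1 (l + d), Gamma (β j + m / l) =
      ∏ j ∈ Finset.Icc 1 (l + d), Gamma ((m * p + r + j) / (l + d)) :=
    Finset.prod_congr rfl fun j hj ↦ by
      rw [Finset.mem_Icc] at hj
      rw [hβ j hj.1 hj.2, hp, Nat.cast_add]
      congr 1
      field
  have hprod_α : ∏ j ∈ Finset.Icc 1 (l + d), Gamma (α j + m / l) =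
      (∏ j ∈ Finset.Icc 1 l, Gamma ((m + j) / l)) *
        ∏ j ∈ Finset.Icc 1 d, Gamma ((m * p + r - m + j) / d) := by
    rw [prod_Icc_one_add]
    congr 1 <;> refine Finset.prod_congr rfl fun j hj ↦ ?_ <;> rw [Finset.mem_Icc] at hj
    · rw [hα j hj.1 (by lia), if_pos hj.2, ← add_div, add_comm]
    · rw [hα (l + j) (by lia) (by lia), if_neg (by lia), hp, Nat.cast_add, Nat.cast_add,
        add_sub_cancel_left]
      congr 1
      field
  have hpole (n : ℕ) : m * p + r - m + 1 ≠ -n := by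
    convert hr n using 1
    ring
  rw [gbinom_eq_prod_Gamma_div (l := l) (d := d) (by lia) (by lia) _ m hpole,
    ← prefactor_eq_rpow_div hl' hd' hp, hprod_β, hprod_α, mul_right_comm]

theorem binom_gamma_product (k l : ℕ) (hl : 1 ≤ l) (hlk : l < k)
    (p : ℝ) (hp : p = (k : ℝ) / (l : ℝ)) (r : ℝ) (hr : -1 < r) (m : ℕ)
    (α β : ℕ → ℝ)
    (hα : ∀ j, 1 ≤ j → j ≤ k →
      α j = if j ≤ l then (j : ℝ) / l else (r + j - l) / ((k : ℝ) - l))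
    (hβ : ∀ j, 1 ≤ j → j ≤ k → β j = (r + j) / k) :
    gbinom ((m : ℝ) * p + r) m
      = (1 / Real.sqrt (2 * Real.pi * l)) * (p / (p - 1)) ^ (r + 1/2) *
        ((∏ j ∈ Finset.Icc 1 k, Real.Gamma (β j + (m : ℝ) / l))
          / (∏ j ∈ Finset.Icc 1 k, Real.Gamma (α j + (m : ℝ) / l))) *
        (p ^ p * (p - 1) ^ (1 - p)) ^ m := by
  have hp_ge : 1 ≤ p := hp ▸ (one_le_div₀ (by positivity)).mpr (by exact_mod_cast hlk.le)
  have hpos : 0 < m * (p - 1) + r + 1 := by nlinarith [m.cast_nonneg (α := ℝ)]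
  exact binom_gamma_product_general k l hl hlk p hp r m
    (fun n ↦ (hpos.trans_le' (neg_nonpos.mpr n.cast_nonneg)).ne') α β hα hβ
end
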